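/- arXiv:1208.4755 — 5 statements merged into one kernel-verified Lean document; each statement's English description precedes it below -/
import Mathlib

section
/- Let K be a Kalton–Roberts constant and let Γ be a nonempty set. Then c₀(Γ) has the ω-SVM property with constant K: for every finite set algebra F and every 1-additive map ν : F → c₀(Γ) there exists a vector measure μ : F → c₀(Γ) such that ‖ν(A) − μ(A)‖ ≤ K for all A ∈ F. -/
/-!
Each coordinate `A ↦ ν A γ` is a real-valued 1-additive map, so it lies within `K` of a finitely
additive `m γ`. The family `m` itself need not define elements of `c₀(Γ)`, but it only has to be
used at finitely many `γ`. Indeed `K ≥ 1 > 0` (`IsKRConst.one_le`), so, `F` being finite and each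
`ν A` vanishing at infinity, the bound `|ν A γ| ≤ K` holds for all `A ∈ F` simultaneously off a
finite set of coordinates. There the zero measure does the job, and the resulting `μ` has finitely
supported values.
-/

open Cardinal ENNReal

/-- A set algebra: contains `∅`, closed under complements and finite unions. -/
def IsSetAlg {Ω : Type*} (F : Set (Set Ω)) : Prop :=
  ∅ ∈ F ∧ (∀ A ∈ F, Aᶜ ∈ F) ∧ ∀ A ∈ F, ∀ B ∈ F, A ∪ B ∈ F

/-- `ν` is 1-additive on the set algebra `F`. -/
def OneAdd {Ω X : Type*} [SeminormedAddCommGroup X] (F : Set (Set Ω)) (ν : Set Ω → X) : Prop :=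
  ∀ A ∈ F, ∀ B ∈ F, Disjoint A B → ‖ν (A ∪ B) - ν A - ν B‖ ≤ 1

/-- `μ` is a (finitely additive) vector measure on the set algebra `F`. -/
def VectMeas {Ω X : Type*} [AddCommGroup X] (F : Set (Set Ω)) (μ : Set Ω → X) : Prop :=
  ∀ A ∈ F, ∀ B ∈ F, Disjoint A B → μ (A ∪ B) = μ A + μ B

/-- `K` is a Kalton–Roberts constant. -/
def IsKRConst (K : ℝ) : Prop :=
  ∀ (Ω : Type) (F : Set (Set Ω)), IsSetAlg F →
    ∀ ν : Set Ω → ℝ, OneAdd F ν →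
      ∃ μ : Set Ω → ℝ, VectMeas F μ ∧ ∀ A ∈ F, |ν A - μ A| ≤ K

/-- `X` has the SVM property with constant `v` (arbitrary set algebras). -/
def HasSVMBound (X : Type*) [SeminormedAddCommGroup X] (v : ℝ) : Prop :=
  ∀ (Ω : Type) (F : Set (Set Ω)), IsSetAlg F →
    ∀ ν : Set Ω → X, OneAdd F ν →
      ∃ μ : Set Ω → X, VectMeas F μ ∧ ∀ A ∈ F, ‖ν A - μ A‖ ≤ v

/-- `X` has the ω-SVM property with constant `v` (finite set algebras). -/
def HasOmegaSVMBound (X : Type*) [SeminormedAddCommGroup X] (v : ℝ) : Prop :=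
  ∀ (Ω : Type) (F : Set (Set Ω)), IsSetAlg F → F.Finite →
    ∀ ν : Set Ω → X, OneAdd F ν →
      ∃ μ : Set Ω → X, VectMeas F μ ∧ ∀ A ∈ F, ‖ν A - μ A‖ ≤ v

/-- `X` has the κ-SVM property with constant `v` (set algebras of cardinality `< κ`). -/
def HasKappaSVMBound (X : Type*) [SeminormedAddCommGroup X] (κ : Cardinal) (v : ℝ) : Prop :=
  ∀ (Ω : Type) (F : Set (Set Ω)), IsSetAlg F → #(↥F) < κ →
    ∀ ν : Set Ω → X, OneAdd F ν →
      ∃ μ : Set Ω → X, VectMeas F μ ∧ ∀ A ∈ F, ‖ν A - μ A‖ ≤ v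

/-- The constant map `1` is 1-additive, while every finitely additive map vanishes at `∅`. -/
lemma IsKRConst.one_le {K : ℝ} (hK : IsKRConst K) : 1 ≤ K := by
  obtain ⟨μ, hμ, hb⟩ := hK Unit Set.univ ⟨trivial, fun _ _ => trivial, fun _ _ _ _ => trivial⟩
    (fun _ => 1) (fun A _ B _ _ => by norm_num)
  have h0 : μ ∅ = 0 := by simpa using hμ ∅ trivial ∅ trivial (by simp)
  simpa [h0] using hb ∅ trivial

namespace ZeroAtInftyContinuousMap

variable {Γ : Type*} [TopologicalSpace Γ]

lemma abs_apply_le_norm (f : ZeroAtInftyContinuousMap Γ ℝ) (γ : Γ) : |f γ| ≤ ‖f‖ := by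
  rw [← norm_toBCF_eq_norm]
  exact f.toBCF.norm_coe_le_norm γ

lemma norm_le_of_abs_apply_le (f : ZeroAtInftyContinuousMap Γ ℝ) {C : ℝ} (hC : 0 ≤ C)
    (h : ∀ γ, |f γ| ≤ C) : ‖f‖ ≤ C := by
  rw [← norm_toBCF_eq_norm]
  exact (BoundedContinuousFunction.norm_le hC).2 h

variable [DiscreteTopology Γ]

/-- A finitely supported function on a discrete space, as an element of `c₀`. -/
def ofFiniteSupport (g : Γ → ℝ) (hg : {γ | g γ ≠ 0}.Finite) : ZeroAtInftyContinuousMap Γ ℝ where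
  toFun := g
  continuous_toFun := continuous_of_discreteTopology
  zero_at_infty' := by
    rw [Filter.cocompact_eq_cofinite]
    refine tendsto_const_nhds.congr' (f₁ := fun _ => (0 : ℝ)) ?_
    filter_upwards [hg.compl_mem_cofinite] with γ hγ
    simpa [eq_comm] using hγ

@[simp]
lemma ofFiniteSupport_apply (g : Γ → ℝ) (hg : {γ | g γ ≠ 0}.Finite) (γ : Γ) :
    ofFiniteSupport g hg γ = g γ := rfl

lemma finite_lt_abs (f : ZeroAtInftyContinuousMap Γ ℝ) {K : ℝ} (hK : 0 < K) :
    {γ | K < |f γ|}.Finite := by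
  have h := f.zero_at_infty'
  rw [Filter.cocompact_eq_cofinite] at h
  have h2 := h (Metric.ball_mem_nhds 0 hK)
  refine Set.Finite.subset (Filter.mem_cofinite.1 h2) fun γ hγ hmem => ?_
  have hlt : |f γ| < K := by simpa using hmem
  exact lt_asymm hlt hγ

end ZeroAtInftyContinuousMap

open ZeroAtInftyContinuousMap in
/-- c₀(Γ) has the ω-SVM property with constant K, where K is a
Kalton–Roberts constant and Γ is a nonempty set (a nonempty discrete space). -/
theorem stmt_0 (K : ℝ) (hK : IsKRConst K)
    (Γ : Type) [TopologicalSpace Γ] [DiscreteTopology Γ] [Nonempty Γ]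
    (Ω : Type) (F : Set (Set Ω)) (hF : IsSetAlg F) (hfin : F.Finite)
    (ν : Set Ω → ZeroAtInftyContinuousMap Γ ℝ) (hν : OneAdd F ν) :
    ∃ μ : Set Ω → ZeroAtInftyContinuousMap Γ ℝ,
      VectMeas F μ ∧ ∀ A ∈ F, ‖ν A - μ A‖ ≤ K := by
  classical
  have hpos : 0 < K := one_pos.trans_le hK.one_le
  have hcoord : ∀ γ, ∃ m : Set Ω → ℝ, VectMeas F m ∧ ∀ A ∈ F, |ν A γ - m A| ≤ K := fun γ =>
    hK Ω F hF (fun A => ν A γ) fun A hA B hB hAB =>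
      (abs_apply_le_norm (ν (A ∪ B) - ν A - ν B) γ).trans (hν A hA B hB hAB)
  choose m hm hmK using hcoord
  -- The coordinates at which the zero measure is not good enough.
  let S : Set Γ := ⋃ A ∈ F, {γ | K < |ν A γ|}
  have hS : S.Finite := hfin.biUnion fun A _ => (ν A).finite_lt_abs hpos
  have hsupp : ∀ A, {γ | (if γ ∈ S then m γ A else 0) ≠ 0}.Finite := fun A =>
    hS.subset fun γ hγ => by
      by_contra h
      exact hγ (if_neg h)
  refine ⟨fun A => ofFiniteSupport _ (hsupp A), fun A hA B hB hAB => ?_, fun A hA => ?_⟩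
  · ext γ
    by_cases h : γ ∈ S
    · simpa [h] using hm γ A hA B hB hAB
    · simp [h]
  · refine norm_le_of_abs_apply_le _ hpos.le fun γ => ?_
    by_cases h : γ ∈ S
    · simpa [h] using hmK γ A hA
    · have hle : |ν A γ| ≤ K := by
        by_contra hlt
        exact h (Set.mem_biUnion hA (not_le.1 hlt))
      simpa [h] using hle
end

section
/- Let K be a Kalton–Roberts constant and let Ω be a compact metric space. Then for every finite set algebra F, every 1-additive map ν : F → C(Ω, ℝ) and every ε > 0 there exists a vector measure μ : F → C(Ω, ℝ) with ‖ν(A) − μ(A)‖ ≤ K + ε for all A ∈ F; in particular C(Ω, ℝ) has the ω-SVM property with constant K + ε for every ε > 0. -/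
/-!
At each point `x` of `Ω₀` the scalar map `A ↦ ν A x` is 1-additive, hence within `K` of a real
measure. As `F` is finite, that measure stays within `K + ε` of `A ↦ ν A y` for all `y` near `x`.
For fixed `y` the measures within `K + ε` of `A ↦ ν A y` form a convex set, so a partition of
unity on `Ω₀` (`exists_continuous_forall_mem_convex_of_local_const`) glues the local choices into
a measure depending continuously on `y`, which is a vector measure with values in `C(Ω₀, ℝ)`.
-/

open Cardinal ENNReal

/-- for a compact metric space Ω₀, the space C(Ω₀, ℝ) has the
ω-SVM property with constant K + ε for every ε > 0. -/
theorem stmt_1 (K : ℝ) (hK : IsKRConst K)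
    (Ω₀ : Type) [MetricSpace Ω₀] [CompactSpace Ω₀]
    (Ω : Type) (F : Set (Set Ω)) (hF : IsSetAlg F) (hfin : F.Finite)
    (ν : Set Ω → ContinuousMap Ω₀ ℝ) (hν : OneAdd F ν)
    (ε : ℝ) (hε : 0 < ε) :
    ∃ μ : Set Ω → ContinuousMap Ω₀ ℝ,
      VectMeas F μ ∧ ∀ A ∈ F, ‖ν A - μ A‖ ≤ K + ε := by
  -- The real case, applied to the values of `ν` at a single point.
  have hpt : ∀ x : Ω₀, ∃ m : Set Ω → ℝ, VectMeas F m ∧ ∀ A ∈ F, |ν A x - m A| ≤ K := by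
    intro x
    refine hK Ω F hF (fun A => ν A x) fun A hA B hB hAB => ?_
    exact ((ν (A ∪ B) - ν A - ν B).norm_coe_le_norm x).trans (hν A hA B hB hAB)
  -- Needed separately because `Ω₀` may be empty.
  have hK0 : 0 ≤ K := by
    obtain ⟨m, -, hm⟩ := hK Ω F hF (fun _ => 0) (by intro A _ B _ _; simp)
    exact (abs_nonneg _).trans (hm ∅ hF.1)
  let t : Ω₀ → Set (Set Ω → ℝ) := fun y =>
    {m | VectMeas F m ∧ ∀ A ∈ F, |ν A y - m A| ≤ K + ε}
  have ht : ∀ y, Convex ℝ (t y) := by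
    rintro y m ⟨hm, hm'⟩ n ⟨hn, hn'⟩ a b ha hb hab
    refine ⟨fun A hA B hB hAB => ?_, fun A hA => ?_⟩
    · simp only [Pi.add_apply, Pi.smul_apply, smul_eq_mul, hm A hA B hB hAB, hn A hA B hB hAB]
      ring
    · have h1 := abs_le.mp (hm' A hA)
      have h2 := abs_le.mp (hn' A hA)
      have h3 : ν A y - (a • m + b • n) A = a * (ν A y - m A) + b * (ν A y - n A) := by
        simp only [Pi.add_apply, Pi.smul_apply, smul_eq_mul]
        linear_combination (-ν A y) * hab
      rw [h3, abs_le]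
      obtain rfl : b = 1 - a := by linarith
      constructor <;> nlinarith
  -- By finiteness of `F`, the measure chosen at `x` still works, up to `ε`, near `x`.
  have hloc : ∀ x : Ω₀, ∃ m, ∀ᶠ y in nhds x, m ∈ t y := by
    intro x
    obtain ⟨m, hm, hm'⟩ := hpt x
    have hev : ∀ᶠ y in nhds x, ∀ A ∈ F, |ν A y - ν A x| < ε :=
      (Filter.eventually_all_finite hfin).2 fun A _ =>
        Metric.tendsto_nhds.1 ((ν A).continuous.tendsto x) ε hε
    refine ⟨m, hev.mono fun y hy => ⟨hm, fun A hA => ?_⟩⟩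
    have := abs_sub_le (ν A y) (ν A x) (m A)
    linarith [hy A hA, hm' A hA]
  obtain ⟨g, hg⟩ := exists_continuous_forall_mem_convex_of_local_const ht hloc
  refine ⟨fun A => ⟨fun y => g y A, (continuous_apply A).comp g.continuous⟩,
    fun A hA B hB hAB => ContinuousMap.ext fun y => (hg y).1 A hA B hB hAB, fun A hA => ?_⟩
  exact (ContinuousMap.norm_le _ (by linarith)).2 fun y => (hg y).2 A hA
end

section
/- Every injective Banach space has the SVM property: if X is a Banach space such that for every Banach space E, every closed subspace F ⊆ E and every bounded operator t : F → X there is a bounded operator T : E → X extending t, then there exists a finite constant v such that for every set algebra F and every 1-additive ν : F → X there is a vector measure μ : F → X with ‖ν(A) − μ(A)‖ ≤ v for all A ∈ F. -/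
/-!
Write `J` for the isometric embedding of `X` into `ℓ_∞(Γ)`, where `Γ` is the unit ball of the dual
of `X`, and `P` for a bounded projection with `P ∘ J = id`, which injectivity provides. For a
1-additive `ν` and `g ∈ Γ` the scalar function `g ∘ ν` is 1-additive, hence within a universal
constant of a real measure `μ_g` by the Kalton–Roberts theorem (`kalton_roberts`). With
`D A = (g (ν A) - μ_g A)_g` in `ℓ_∞(Γ)`, the function `μ A = ν A - P (D A)` is a measure, because
`D (A ∪ B) - D A - D B = J (ν (A ∪ B) - ν A - ν B)` for disjoint `A`, `B`, and it is within
`‖P‖` times that constant of `ν`.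

The Kalton–Roberts theorem is proved with the following ingredients.

* Duality (`hahn_banach_l1`): `ν` is within `s` of an affine set function (a measure plus a
  constant) iff `∑ cᵢ ν(Aᵢ) ≤ s ∑ |cᵢ|` whenever `∑ cᵢ = 0` and `∑ cᵢ 1_{Aᵢ} = 0`. As only finitely
  many sets are involved at a time, this may be verified on finite algebras.
* Self-improvement (`pairing_le`): if such a bound holds with `s`, it holds with
  `31/32 s + 7/2`; hence it holds with every `s > 112`. Indeed, let `f` be almost affine with
  `|f| ≤ s`, and suppose that two probability distributions on sets have the same cover function
  `w`, with the average of `f` close to `s` for the first and to `-s` for the second. The sets of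
  the first and the complements of the sets of the second have large `f`, and so have their
  intersections, with cover function `w (1 - w) ≤ 1/4`. Intersecting further yields
  a family with cover function at most `1/256` and still large average.
* Concentrators (`exists_concentrator`): a bipartite graph with `2M` inputs of degree `3` and `M`
  outputs in which every set of at most `M/128` inputs can be matched. Given `2M` sets covering each
  point at most `M/128` times, the matchings cut them into three pieces each and reassemble
  the pieces into `M` sets (`sum_le_of_sparse_cover`). As `f` changes by a bounded amount per piece,
  the average of `f` over such a sparse family is at most about `s / 2`.
-/

open Cardinal ENNReal

/--  is an injective Banach space. -/
def IsInjectiveBanach (X : Type*) [NormedAddCommGroup X] [NormedSpace ℝ X] : Prop :=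
  ∀ (E : Type) [NormedAddCommGroup E] [NormedSpace ℝ E] [CompleteSpace E],
    ∀ F : Submodule ℝ E, IsClosed (F : Set E) →
      ∀ t : F →L[ℝ] X, ∃ T : E →L[ℝ] X, ∀ y : F, T y = t y

/-! ### Concentrators -/

lemma pow_self_le_factorial (n : ℕ) : (n : ℝ) ^ n ≤ 3 ^ n * n.factorial := by
  have h := Real.pow_div_factorial_le_exp (n : ℝ) (Nat.cast_nonneg n) n
  have hpos : (0 : ℝ) < n.factorial := by exact_mod_cast n.factorial_pos
  rw [div_le_iff₀ hpos] at h
  refine h.trans ?_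
  gcongr
  rw [← mul_one (n : ℝ), Real.exp_nat_mul]
  gcongr
  exact Real.exp_one_lt_three.le

/-- The number of maps `G` all of whose edges out of `S` end in `T`. -/
lemma card_trapped_maps (M : ℕ) (S : Finset (Fin (2 * M))) (T : Finset (Fin M)) :
    (Fintype.piFinset fun i : Fin (2 * M) =>
      if i ∈ S then Fintype.piFinset (fun _ : Fin 3 => T) else Finset.univ).card
      = (T.card ^ 3) ^ S.card * (M ^ 3) ^ (2 * M - S.card) := by
  rw [Fintype.card_piFinset]
  have : ∀ i : Fin (2 * M), (if i ∈ S then Fintype.piFinset (fun _ : Fin 3 => T)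
      else Finset.univ).card = if i ∈ S then T.card ^ 3 else M ^ 3 := by
    intro i
    split_ifs
    · simp [Fintype.card_piFinset]
    · simp
  simp only [this]
  rw [Finset.prod_ite]
  simp only [Finset.prod_const, Finset.filter_mem_eq_inter, Finset.univ_inter]
  congr 2
  rw [Finset.filter_not, Finset.card_sdiff]
  simp

/-- The union bound for a fixed size `n`: the fraction of graphs in which some `n` inputs have all
their neighbours among some `n` outputs is at most `7⁻ⁿ`. -/
lemma trapped_term_le (M n : ℕ) (hn : 1 ≤ n) (hM : 128 * n ≤ M) :
    (((2 * M).choose n * M.choose n * ((n ^ 3) ^ n * (M ^ 3) ^ (2 * M - n)) : ℕ) : ℝ)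
      ≤ (1 / 7) ^ n * ((M : ℝ) ^ 3) ^ (2 * M) := by
  have hMpos : (0 : ℝ) < M := by
    have : 0 < M := by omega
    exact_mod_cast this
  have hf : (0 : ℝ) < n.factorial := by exact_mod_cast n.factorial_pos
  have h1 : (((2 * M).choose n : ℕ) : ℝ) ≤ (2 * M : ℝ) ^ n / n.factorial := by
    have := Nat.choose_le_pow_div (α := ℝ) n (2 * M)
    push_cast at this
    exact this
  have h2 : ((M.choose n : ℕ) : ℝ) ≤ (M : ℝ) ^ n / n.factorial := Nat.choose_le_pow_div n M
  have h3 := pow_self_le_factorial n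
  have hsplit : ((M : ℝ) ^ 3) ^ (2 * M) = ((M : ℝ) ^ 3) ^ n * ((M : ℝ) ^ 3) ^ (2 * M - n) := by
    rw [← pow_add]; congr 1; omega
  rw [hsplit]
  push_cast
  have h4 : (n : ℝ) ^ n / n.factorial ≤ 3 ^ n := by rwa [div_le_iff₀ hf]
  have h5 : (18 * n : ℝ) ^ n ≤ (1 / 7 * M : ℝ) ^ n := by
    have : (128 * n : ℝ) ≤ M := by exact_mod_cast hM
    exact pow_le_pow_left₀ (by positivity) (by linarith) n
  have key : (2 * M : ℝ) ^ n / n.factorial * ((M : ℝ) ^ n / n.factorial) * ((n : ℝ) ^ 3) ^ n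
      ≤ (1 / 7) ^ n * ((M : ℝ) ^ 3) ^ n := by
    calc (2 * M : ℝ) ^ n / n.factorial * ((M : ℝ) ^ n / n.factorial) * ((n : ℝ) ^ 3) ^ n
        = (2 * M : ℝ) ^ n * (M : ℝ) ^ n * (n : ℝ) ^ n
            * (((n : ℝ) ^ n / n.factorial) * ((n : ℝ) ^ n / n.factorial)) := by
          rw [← pow_mul, mul_comm 3 n, pow_mul]; field_simp
      _ ≤ (2 * M : ℝ) ^ n * (M : ℝ) ^ n * (n : ℝ) ^ n * (3 ^ n * 3 ^ n) := by gcongr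
      _ = ((M : ℝ) ^ n * (M : ℝ) ^ n) * (18 * n : ℝ) ^ n := by
          simp only [← mul_pow]; congr 1; ring
      _ ≤ ((M : ℝ) ^ n * (M : ℝ) ^ n) * (1 / 7 * M : ℝ) ^ n := by gcongr
      _ = (1 / 7) ^ n * ((M : ℝ) ^ 3) ^ n := by
          simp only [← mul_pow]; congr 1; ring
  calc _ ≤ (2 * M : ℝ) ^ n / n.factorial * ((M : ℝ) ^ n / n.factorial)
          * (((n : ℝ) ^ 3) ^ n * ((M : ℝ) ^ 3) ^ (2 * M - n)) := by gcongr
    _ = ((2 * M : ℝ) ^ n / n.factorial * ((M : ℝ) ^ n / n.factorial) * ((n : ℝ) ^ 3) ^ n)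
          * ((M : ℝ) ^ 3) ^ (2 * M - n) := by ring
    _ ≤ (1 / 7) ^ n * ((M : ℝ) ^ 3) ^ n * ((M : ℝ) ^ 3) ^ (2 * M - n) := by gcongr
    _ = _ := by ring

/-- Existence of concentrators, by counting: the graphs violating Hall's condition for some nonempty
set of at most `M / 128` inputs make up at most a proportion `∑ 7⁻ⁿ ≤ 1/6` of all graphs. `G i k` is
the `k`-th neighbour of the input `i`; repetitions are allowed. -/
lemma exists_concentrator (M : ℕ) (hM : 1 ≤ M) :
    ∃ G : Fin (2 * M) → Fin 3 → Fin M, ∀ S : Finset (Fin (2 * M)), 128 * S.card ≤ M →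
      S.card ≤ (S.biUnion fun i => Finset.univ.image (G i)).card := by
  classical
  by_contra! hcon
  let trap (S : Finset (Fin (2 * M))) (T : Finset (Fin M)) : Finset (Fin (2 * M) → Fin 3 → Fin M) :=
    Fintype.piFinset fun i => if i ∈ S then Fintype.piFinset (fun _ : Fin 3 => T) else Finset.univ
  let bad : Finset (Fin (2 * M) → Fin 3 → Fin M) :=
    (Finset.Icc 1 (M / 128)).biUnion fun n =>
      (Finset.powersetCard n Finset.univ ×ˢ Finset.powersetCard n Finset.univ).biUnion
        fun ST => trap ST.1 ST.2
  have hall : (Finset.univ : Finset (Fin (2 * M) → Fin 3 → Fin M)) ⊆ bad := by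
    intro G _
    obtain ⟨S, hS, hlt⟩ := hcon G
    have hSM : S.card ≤ (Finset.univ : Finset (Fin M)).card := by
      rw [Finset.card_univ, Fintype.card_fin]; omega
    -- Enlarge the neighbourhood of `S` to a set `T` of exactly `S.card` outputs.
    obtain ⟨T, hsub, -, hT⟩ := Finset.exists_subsuperset_card_eq
      (Finset.subset_univ (S.biUnion fun i => Finset.univ.image (G i))) hlt.le hSM
    refine Finset.mem_biUnion.2 ⟨S.card, ?_, Finset.mem_biUnion.2 ⟨(S, T), ?_, ?_⟩⟩
    · rw [Finset.mem_Icc]; omega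
    · simp [hT]
    · simp only [trap, Fintype.mem_piFinset]
      intro i
      split_ifs with hi
      · rw [Fintype.mem_piFinset]
        intro k
        exact hsub (Finset.mem_biUnion.2 ⟨i, hi, Finset.mem_image_of_mem _ (Finset.mem_univ k)⟩)
      · exact Finset.mem_univ _
  have hcard := Finset.card_le_card hall
  have htot : ((Finset.univ : Finset (Fin (2 * M) → Fin 3 → Fin M)).card : ℝ)
      = ((M : ℝ) ^ 3) ^ (2 * M) := by
    simp
  have hbad : (bad.card : ℝ) ≤ ∑ n ∈ Finset.Icc 1 (M / 128), (1 / 7) ^ n * ((M : ℝ) ^ 3) ^ (2 * M) := by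
    calc (bad.card : ℝ) ≤ ((∑ n ∈ Finset.Icc 1 (M / 128),
          ((2 * M).choose n * M.choose n * ((n ^ 3) ^ n * (M ^ 3) ^ (2 * M - n))) : ℕ) : ℝ) := by
          refine Nat.cast_le.2 (Finset.card_biUnion_le.trans (Finset.sum_le_sum fun n _ => ?_))
          refine Finset.card_biUnion_le.trans (le_of_eq ?_)
          rw [Finset.sum_congr rfl (g := fun _ => (n ^ 3) ^ n * (M ^ 3) ^ (2 * M - n))]
          · simp
          · rintro ⟨S, T⟩ hST
            simp only [Finset.mem_product, Finset.mem_powersetCard] at hST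
            simp only [trap]
            rw [card_trapped_maps, hST.1.2, hST.2.2]
      _ ≤ _ := by
          rw [Nat.cast_sum]
          refine Finset.sum_le_sum fun n hn => ?_
          rw [Finset.mem_Icc] at hn
          exact trapped_term_le M n hn.1 (by omega)
  have hgeom : ∀ k : ℕ, ∑ n ∈ Finset.Icc 1 k, (1 / 7 : ℝ) ^ n ≤ 1 / 6 - (1 / 6) * (1 / 7) ^ k := by
    intro k
    induction k with
    | zero => simp
    | succ k ih =>
      rw [Finset.sum_Icc_succ_top (by omega)]
      rw [pow_succ]
      linarith
  have hpos : (0 : ℝ) < ((M : ℝ) ^ 3) ^ (2 * M) := by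
    have : (0 : ℝ) < M := by exact_mod_cast hM
    positivity
  rw [← Finset.sum_mul] at hbad
  have hc : ((Finset.univ : Finset (Fin (2 * M) → Fin 3 → Fin M)).card : ℝ) ≤ bad.card := by
    exact_mod_cast hcard
  rw [htot] at hc
  have hp7 : (0 : ℝ) ≤ (1 / 7) ^ (M / 128) := by positivity
  have hs : ∑ n ∈ Finset.Icc 1 (M / 128), (1 / 7 : ℝ) ^ n ≤ 1 / 6 := by linarith [hgeom (M / 128)]
  nlinarith [mul_le_mul_of_nonneg_right hs hpos.le]

/-! ### Averages over sparse families -/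

lemma almost_additive_biUnion {Ω K : Type} (φ : Set Ω → ℝ) (h0 : φ ∅ = 0)
    (hφ : ∀ A B, Disjoint A B → |φ (A ∪ B) - φ A - φ B| ≤ 2) (C : K → Set Ω) (t : Finset K)
    (hC : (t : Set K).PairwiseDisjoint C) :
    |φ (⋃ x ∈ t, C x) - ∑ x ∈ t, φ (C x)| ≤ 2 * t.card := by
  classical
  induction t using Finset.induction_on with
  | empty => simp [h0]
  | insert a t ha ih =>
    rw [Finset.set_biUnion_insert, Finset.sum_insert ha, Finset.card_insert_of_notMem ha]
    have hd : Disjoint (C a) (⋃ x ∈ t, C x) := by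
      rw [Set.disjoint_iUnion₂_right]
      intro x hx
      exact hC (by simp) (by simp [hx]) (fun h => ha (h ▸ hx))
    have h1 := hφ _ _ hd
    have h2 := ih (hC.subset (by simp))
    push_cast
    rw [abs_le] at *
    constructor <;> linarith [h1.1, h1.2, h2.1, h2.2]

/-- If at most `2M` sets cover each point at most `M / 128` times, then they can be cut into three
pieces each which reassemble, without overlap, into `M` sets. -/
lemma sum_le_of_sparse_cover {Ω J : Type} [Fintype J] (φ : Set Ω → ℝ) (h0 : φ ∅ = 0)
    (hφ : ∀ A B, Disjoint A B → |φ (A ∪ B) - φ A - φ B| ≤ 2) (s : ℝ) (hs : ∀ A, φ A ≤ s)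
    (M : ℕ) (hM : 1 ≤ M) (hJ : Fintype.card J ≤ 2 * M) (A : J → Set Ω)
    (hA : ∀ (ω : Ω) (S : Finset J), (∀ j ∈ S, ω ∈ A j) → 128 * S.card ≤ M) :
    ∑ j, φ (A j) ≤ M * s + 24 * M := by
  classical
  obtain ⟨G₀, hG₀⟩ := exists_concentrator M hM
  obtain ⟨e⟩ : Nonempty (J ↪ Fin (2 * M)) :=
    Function.Embedding.nonempty_of_card_le (by simpa using hJ)
  let G : J → Fin 3 → Fin M := fun j => G₀ (e j)
  -- Hall's theorem at each point `ω`: `m i` selects the edge matching the input `i`.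
  have hm : ∀ ω : Ω, ∃ m : J → Fin 3, ∀ i i', ω ∈ A i → ω ∈ A i' →
      G i (m i) = G i' (m i') → i = i' := by
    intro ω
    obtain ⟨f, hf, hfm⟩ := (Finset.all_card_le_biUnion_card_iff_exists_injective
      (fun j : {j // ω ∈ A j} => Finset.univ.image (G j))).1 (by
        intro S
        have h := hG₀ (S.map ((Function.Embedding.subtype _).trans e)) (by
          rw [Finset.card_map]
          have := hA ω (S.map (Function.Embedding.subtype _)) (by
            simp only [Finset.mem_map]
            rintro _ ⟨j, -, rfl⟩
            exact j.2)
          rwa [Finset.card_map] at this)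
        rw [Finset.card_map] at h
        refine h.trans (le_of_eq ?_)
        congr 1
        ext x
        simp [G])
    have : ∀ j : {j // ω ∈ A j}, ∃ k, G j k = f j := fun j => by simpa using hfm j
    choose k hk using this
    refine ⟨fun j => if h : ω ∈ A j then k ⟨j, h⟩ else 0, fun i i' hi hi' heq => ?_⟩
    simp only [hi, hi', dif_pos] at heq
    rw [hk ⟨i, hi⟩, hk ⟨i', hi'⟩] at heq
    exact congrArg Subtype.val (hf heq)
  choose m hm using hm
  -- `C (j, k)` is the part of `A j` sent along its `k`-th edge.
  let C : J × Fin 3 → Set Ω := fun x => {ω | ω ∈ A x.1 ∧ m ω x.1 = x.2}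
  have h1 : ∀ j, φ (A j) ≤ ∑ k, φ (C (j, k)) + 6 := by
    intro j
    have h := almost_additive_biUnion φ h0 hφ (fun k => C (j, k)) Finset.univ (by
      intro k _ k' _ hkk
      rw [Function.onFun, Set.disjoint_left]
      rintro ω ⟨_, h⟩ ⟨_, h'⟩
      exact hkk (h.symm.trans h'))
    have hU : (⋃ k ∈ (Finset.univ : Finset (Fin 3)), C (j, k)) = A j := by
      ext ω; simp [C]
    rw [hU] at h
    simp only [Finset.card_univ, Fintype.card_fin] at h
    rw [abs_le] at h
    push_cast at h
    linarith [h.2]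
  have h2 : ∀ b : Fin M, ∑ x : J × Fin 3 with G x.1 x.2 = b, φ (C x)
      ≤ s + 2 * ((Finset.univ.filter fun x : J × Fin 3 => G x.1 x.2 = b).card : ℝ) := by
    intro b
    have h := almost_additive_biUnion φ h0 hφ C
      (Finset.univ.filter fun x : J × Fin 3 => G x.1 x.2 = b) (by
      rintro ⟨i, k⟩ hk ⟨i', k'⟩ hk' hne
      rw [Function.onFun, Set.disjoint_left]
      rintro ω ⟨hi, hik⟩ ⟨hi', hik'⟩
      simp only [Finset.coe_filter, Finset.mem_univ, true_and, Set.mem_ofPred_eq] at hk hk'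
      dsimp only at hi hik hi' hik'
      subst hik hik'
      have := hm ω i i' hi hi' (hk.trans hk'.symm)
      subst this
      exact hne rfl)
    rw [abs_le] at h
    linarith [h.1, hs (⋃ x ∈ (Finset.univ.filter fun x : J × Fin 3 => G x.1 x.2 = b), C x)]
  have h3 : ∑ j, φ (A j) ≤ ∑ x : J × Fin 3, φ (C x) + 6 * Fintype.card J := by
    calc _ ≤ ∑ j, (∑ k, φ (C (j, k)) + 6) := Finset.sum_le_sum fun j _ => h1 j
      _ = _ := by
        rw [Finset.sum_add_distrib, Fintype.sum_prod_type]
        simp; ring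
  have h4 : ∑ x : J × Fin 3, φ (C x) ≤ M * s + 6 * Fintype.card J := by
    rw [← Finset.sum_fiberwise (s := Finset.univ) (g := fun x : J × Fin 3 => G x.1 x.2)]
    refine (Finset.sum_le_sum fun b _ => h2 b).trans (le_of_eq ?_)
    rw [Finset.sum_add_distrib, ← Finset.mul_sum, ← Nat.cast_sum,
      ← Finset.card_eq_sum_card_fiberwise (fun _ _ => Finset.mem_univ _)]
    simp; ring
  have h5 : (Fintype.card J : ℝ) ≤ 2 * M := by exact_mod_cast hJ
  linarith

/-- Weighted form of `sum_le_of_sparse_cover`: replace each weight `p i` by the multiplicity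
`⌊p i * 2M⌋` and let `M → ∞`. -/
lemma avg_le_of_sparse_cover {Ω I : Type} [Fintype I] (φ : Set Ω → ℝ) (h0 : φ ∅ = 0)
    (hφ : ∀ A B, Disjoint A B → |φ (A ∪ B) - φ A - φ B| ≤ 2) (s : ℝ) (hs : ∀ A, φ A ≤ s)
    (p : I → ℝ) (hp : ∀ i, 0 ≤ p i) (hp1 : ∑ i, p i = 1) (A : I → Set Ω)
    (hA : ∀ ω, ∑ i, p i * (A i).indicator 1 ω ≤ 1 / 256) :
    ∑ i, p i * φ (A i) ≤ s / 2 + 12 := by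
  classical
  have hM : ∀ M : ℕ, 1 ≤ M →
      ∑ i, ((⌊p i * (2 * M : ℝ)⌋₊ : ℝ) / (2 * M : ℝ)) * φ (A i) ≤ s / 2 + 12 := by
    intro M hM
    have hMpos : (0 : ℝ) < M := by exact_mod_cast hM
    have hfl : ∀ i, (⌊p i * (2 * M : ℝ)⌋₊ : ℝ) ≤ p i * (2 * M) := fun i =>
      Nat.floor_le (mul_nonneg (hp i) (by positivity))
    have h := sum_le_of_sparse_cover (J := Σ i, Fin ⌊p i * (2 * M : ℝ)⌋₊) φ h0 hφ s hs M hM (by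
        rw [Fintype.card_sigma]
        simp only [Fintype.card_fin]
        have : ((∑ i, ⌊p i * (2 * M : ℝ)⌋₊ : ℕ) : ℝ) ≤ ((2 * M : ℕ) : ℝ) := by
          push_cast
          calc _ ≤ ∑ i, p i * (2 * M : ℝ) := Finset.sum_le_sum fun i _ => hfl i
            _ = _ := by rw [← Finset.sum_mul, hp1, one_mul]
        exact_mod_cast this)
      (fun y => A y.1) (by
        intro ω S hS
        have h1 : S.card ≤ ∑ i, if ω ∈ A i then ⌊p i * (2 * M : ℝ)⌋₊ else 0 := by
          calc S.card ≤ (Finset.univ.sigma fun i => if ω ∈ A i then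
                (Finset.univ : Finset (Fin ⌊p i * (2 * M : ℝ)⌋₊)) else ∅).card := by
                refine Finset.card_le_card fun y hy => ?_
                simp [hS y hy]
            _ = _ := by
                rw [Finset.card_sigma]
                refine Finset.sum_congr rfl fun i _ => ?_
                split_ifs <;> simp
        have h2 : (S.card : ℝ) ≤ (∑ i, p i * (A i).indicator 1 ω) * (2 * M) := by
          calc (S.card : ℝ) ≤ ((∑ i, if ω ∈ A i then ⌊p i * (2 * M : ℝ)⌋₊ else 0 : ℕ) : ℝ) := by
                exact_mod_cast h1
            _ ≤ _ := by
                push_cast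
                rw [Finset.sum_mul]
                refine Finset.sum_le_sum fun i _ => ?_
                by_cases hi : ω ∈ A i
                · simpa [hi] using hfl i
                · simp [hi]
        have h3 : (128 * S.card : ℝ) ≤ M := by nlinarith [hA ω]
        exact_mod_cast h3)
    rw [Fintype.sum_sigma] at h
    simp only [Finset.sum_const, Finset.card_univ, Fintype.card_fin, nsmul_eq_mul] at h
    simp only [div_mul_eq_mul_div]
    rw [← Finset.sum_div, div_le_iff₀ (by positivity)]
    linarith
  have hlim : Filter.Tendsto (fun M : ℕ =>
      ∑ i, ((⌊p i * (2 * M : ℝ)⌋₊ : ℝ) / (2 * M : ℝ)) * φ (A i)) Filter.atTop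
      (nhds (∑ i, p i * φ (A i))) := by
    refine tendsto_finsetSum _ fun i _ => Filter.Tendsto.mul_const _ ?_
    refine (tendsto_nat_floor_mul_div_atTop (hp i)).comp ?_
    exact Filter.Tendsto.const_mul_atTop (by norm_num) tendsto_natCast_atTop_atTop
  exact le_of_tendsto hlim (Filter.eventually_atTop.2 ⟨1, hM⟩)

/-! ### Duality -/

/-- Hahn–Banach extension on the finitely supported functions on `I` with `s` times the `ℓ₁` norm:
the functional given by `ν`, restricted to the linear relations among the vectors `v i`, extends to a
functional of norm at most `s`, whose values at the unit vectors are the `f i`. -/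
lemma hahn_banach_l1 {I W : Type} [AddCommGroup W] [Module ℝ W] (v : I → W) (ν : I → ℝ) (s : ℝ)
    (hs : 0 ≤ s)
    (h : ∀ (K : Type) [Fintype K] (c : K → ℝ) (a : K → I), ∑ k, c k • v (a k) = 0 →
      ∑ k, c k * ν (a k) ≤ s * ∑ k, |c k|) :
    ∃ f : I → ℝ, (∀ i, |f i| ≤ s) ∧
      ∀ (K : Type) [Fintype K] (c : K → ℝ) (a : K → I), ∑ k, c k • v (a k) = 0 →
        ∑ k, c k * f (a k) = ∑ k, c k * ν (a k) := by
  classical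
  let Φ := Finsupp.linearCombination ℝ v
  let νlin := Finsupp.linearCombination ℝ ν
  let N : (I →₀ ℝ) → ℝ := fun c => s * c.sum fun _ x => |x|
  obtain ⟨g, hg, hgN⟩ := exists_extension_of_le_sublinear
    (⟨LinearMap.ker Φ, νlin.comp (LinearMap.ker Φ).subtype⟩ : (I →₀ ℝ) →ₗ.[ℝ] ℝ) N
    (by
      intro r hr c
      simp only [N]
      rw [Finsupp.sum_smul_index (fun _ => abs_zero)]
      simp only [abs_mul, abs_of_pos hr, Finsupp.sum, ← Finset.mul_sum]
      ring)
    (by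
      intro c d
      simp only [N]
      rw [← mul_add]
      refine mul_le_mul_of_nonneg_left ?_ hs
      rw [Finsupp.sum_of_support_subset (c + d) Finsupp.support_add _ (fun _ _ => abs_zero),
        Finsupp.sum_of_support_subset c (Finset.subset_union_left (s₂ := d.support)) _
          (fun _ _ => abs_zero),
        Finsupp.sum_of_support_subset d (Finset.subset_union_right (s₁ := c.support)) _
          (fun _ _ => abs_zero), ← Finset.sum_add_distrib]
      exact Finset.sum_le_sum fun i _ => abs_add_le _ _)
    (by
      rintro ⟨c, hc⟩
      have hc' : Φ c = 0 := hc
      change νlin c ≤ N c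
      have := h c.support (fun k => c k) (fun k => k.1) (by
        rw [← hc']
        simp only [Φ, Finsupp.linearCombination_apply, Finsupp.sum]
        exact Finset.sum_coe_sort c.support fun i => c i • v i)
      simp only [N, νlin, Finsupp.linearCombination_apply, Finsupp.sum, smul_eq_mul]
      rw [Finset.sum_coe_sort c.support fun i => c i * ν i,
        Finset.sum_coe_sort c.support fun i => |c i|] at this
      exact this)
  refine ⟨fun i => g (Finsupp.single i 1), fun i => ?_, ?_⟩
  · have h1 := hgN (Finsupp.single i 1)
    have h2 := hgN (-Finsupp.single i 1)
    have hN1 : N (Finsupp.single i 1) = s := by simp [N]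
    have hN2 : N (-Finsupp.single i 1) = s := by
      simp only [N]; rw [← Finsupp.single_neg, Finsupp.sum_single_index (by simp)]; simp
    rw [hN1] at h1
    rw [hN2, map_neg] at h2
    exact abs_le.2 ⟨by linarith, h1⟩
  · intro K _ c a hca
    let d : I →₀ ℝ := ∑ k, c k • Finsupp.single (a k) 1
    have hd : Φ d = 0 := by
      rw [← hca]
      simp [d, Φ, map_sum]
    have := hg ⟨d, hd⟩
    change g d = νlin d at this
    simpa only [d, νlin, map_sum, map_smul, smul_eq_mul, Finsupp.linearCombination_single,
      one_mul] using this

/-! ### Self-improvement of the bound -/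

/-- There is a finitely supported probability distribution on subsets of `Ω` whose cover function
(the probability that the random set contains `ω`) is `w`, and for which the average of `f` is at
least `a`. -/
def Fam {Ω : Type} (f : Set Ω → ℝ) (w : Ω → ℝ) (a : ℝ) : Prop :=
  ∃ (I : Type) (_ : Fintype I) (p : I → ℝ) (A : I → Set Ω), (∀ i, 0 ≤ p i) ∧ ∑ i, p i = 1 ∧
    (∀ ω, ∑ i, p i * (A i).indicator 1 ω = w ω) ∧ a ≤ ∑ i, p i * f (A i)

/-- `f` satisfies, up to an error of `2`, the identity characterising measures plus constants. -/
def AlmostAffine {Ω : Type} (f : Set Ω → ℝ) : Prop :=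
  ∀ A B, Disjoint A B → |f (A ∪ B) + f ∅ - f A - f B| ≤ 2

/-- Intersections of independent random sets: almost modularity gives
`f (A ∩ B) ≥ f A + f B - f (A ∪ B) - 4`. -/
lemma Fam.inter {Ω : Type} {f : Set Ω → ℝ} (hf : AlmostAffine f) {s : ℝ} (hs : ∀ A, f A ≤ s)
    {w w' : Ω → ℝ} {a a' : ℝ} (h : Fam f w a) (h' : Fam f w' a') :
    Fam f (fun ω => w ω * w' ω) (a + a' - s - 4) := by
  obtain ⟨I, _, p, A, hp, hp1, hw, ha⟩ := h
  obtain ⟨J, _, q, B, hq, hq1, hw', ha'⟩ := h'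
  have key : ∀ A B, f A + f B - s - 4 ≤ f (A ∩ B) := by
    intro A B
    have h1 := hf A (B \ A) Set.disjoint_sdiff_right
    have h2 := hf (B \ A) (A ∩ B) (by
      rw [Set.disjoint_left]; rintro x ⟨_, h⟩ ⟨h', _⟩; exact h h')
    rw [Set.union_sdiff_self] at h1
    rw [Set.inter_comm A B, Set.sdiff_union_inter, Set.inter_comm B A] at h2
    rw [abs_le] at h1 h2
    linarith [hs (A ∪ B), h1.1, h1.2, h2.1, h2.2]
  refine ⟨I × J, inferInstance, fun x => p x.1 * q x.2, fun x => A x.1 ∩ B x.2,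
    fun x => mul_nonneg (hp _) (hq _), ?_, fun ω => ?_, ?_⟩
  · rw [Fintype.sum_prod_type, ← Fintype.sum_mul_sum, hp1, hq1, one_mul]
  · dsimp only
    rw [← hw, ← hw', Fintype.sum_mul_sum, Fintype.sum_prod_type]
    refine Finset.sum_congr rfl fun i _ => Finset.sum_congr rfl fun j _ => ?_
    rw [Set.inter_indicator_one, Pi.mul_apply]
    ring
  · have h1 : ∑ x : I × J, p x.1 * q x.2 * (f (A x.1) + f (B x.2) - s - 4)
        = ∑ i, p i * f (A i) + ∑ j, q j * f (B j) - s - 4 := by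
      have e1 : ∀ i, ∑ j, p i * q j * (f (A i) + f (B j) - s - 4)
          = p i * f (A i) + p i * (∑ j, q j * f (B j) - s - 4) := by
        intro i
        have : ∀ j, p i * q j * (f (A i) + f (B j) - s - 4)
            = p i * (q j * (f (A i) - s - 4) + q j * f (B j)) := fun j => by ring
        simp only [this]
        rw [← Finset.mul_sum, Finset.sum_add_distrib, ← Finset.sum_mul, hq1]
        ring
      rw [Fintype.sum_prod_type]
      simp only [e1]
      rw [Finset.sum_add_distrib, ← Finset.sum_mul, hp1]
      ring
    have h2 : ∑ x : I × J, p x.1 * q x.2 * (f (A x.1) + f (B x.2) - s - 4)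
        ≤ ∑ x : I × J, p x.1 * q x.2 * f (A x.1 ∩ B x.2) :=
      Finset.sum_le_sum fun x _ =>
        mul_le_mul_of_nonneg_left (key _ _) (mul_nonneg (hp _) (hq _))
    linarith

lemma AlmostAffine.compl {Ω : Type} {f : Set Ω → ℝ} (hf : AlmostAffine f) (A : Set Ω) :
    |f Set.univ + f ∅ - f A - f Aᶜ| ≤ 2 := by
  have := hf A Aᶜ disjoint_compl_right
  rwa [Set.union_compl_self] at this

lemma Fam.compl {Ω : Type} {f : Set Ω → ℝ} (hf : AlmostAffine f)
    {w : Ω → ℝ} {b : ℝ} (h : Fam (fun A => -f A) w b) :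
    Fam f (fun ω => 1 - w ω) (b + (f Set.univ + f ∅) - 2) := by
  classical
  obtain ⟨I, _, p, A, hp, hp1, hw, ha⟩ := h
  refine ⟨I, inferInstance, p, fun i => (A i)ᶜ, hp, hp1, fun ω => ?_, ?_⟩
  · dsimp only
    rw [← hw, ← hp1, ← Finset.sum_sub_distrib]
    refine Finset.sum_congr rfl fun i _ => ?_
    by_cases hi : ω ∈ A i <;> simp [hi]
  · have h1 : ∑ i, p i * (-f (A i) + (f Set.univ + f ∅ - 2)) ≤ ∑ i, p i * f (A i)ᶜ := by
      refine Finset.sum_le_sum fun i _ => mul_le_mul_of_nonneg_left ?_ (hp i)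
      linarith [(abs_le.1 (hf.compl (A i))).2]
    simp only [mul_add] at h1
    rw [Finset.sum_add_distrib, ← Finset.sum_mul, hp1] at h1
    dsimp only at ha ⊢
    linarith

lemma Fam.le {Ω : Type} {f : Set Ω → ℝ} {s : ℝ} (hs : ∀ A, f A ≤ s) {w : Ω → ℝ} {a : ℝ}
    (h : Fam f w a) : a ≤ s := by
  obtain ⟨I, _, p, A, hp, hp1, -, ha⟩ := h
  refine ha.trans ?_
  calc _ ≤ ∑ i, p i * s := Finset.sum_le_sum fun i _ => mul_le_mul_of_nonneg_left (hs _) (hp i)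
    _ = s := by rw [← Finset.sum_mul, hp1, one_mul]

/-- Complements of sets with `f` close to `s` would have `f` below `-s` if `f univ + f ∅` were very
negative. -/
lemma Fam.univ_add_empty {Ω : Type} {f : Set Ω → ℝ} (hf : AlmostAffine f) {s : ℝ}
    (hs : ∀ A, |f A| ≤ s) {w : Ω → ℝ} {a : ℝ} (h : Fam f w a) :
    a - s - 2 ≤ f Set.univ + f ∅ := by
  have h1 : a ≤ f Set.univ + f ∅ + 2 + s :=
    h.le fun A => by
      linarith [(abs_le.1 (hf.compl A)).1, (abs_le.1 (hs Aᶜ)).1]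
  linarith

lemma Fam.avg_le {Ω : Type} {f : Set Ω → ℝ} (hf : AlmostAffine f) {s : ℝ} (hs : ∀ A, f A ≤ s)
    (h0 : f ∅ ≤ 0) {w : Ω → ℝ} {a : ℝ} (h : Fam f w a) (hw : ∀ ω, w ω ≤ 1 / 256) :
    a ≤ s / 2 + 12 := by
  obtain ⟨I, _, p, A, hp, hp1, hpw, ha⟩ := h
  have := avg_le_of_sparse_cover (fun A => f A - f ∅) (sub_self _)
    (fun A B hAB => by
      have := hf A B hAB
      rwa [show f (A ∪ B) - f ∅ - (f A - f ∅) - (f B - f ∅)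
        = f (A ∪ B) + f ∅ - f A - f B by ring])
    (s - f ∅) (fun A => by linarith [hs A]) p hp hp1 A (fun ω => (hpw ω).trans_le (hw ω))
  simp only [mul_sub, Finset.sum_sub_distrib, ← Finset.sum_mul, hp1] at this
  linarith

/-- Two distributions with the same cover function cannot have averages of `f` too close to `s` and
`-s` respectively. -/
lemma Fam.add_le {Ω : Type} {f : Set Ω → ℝ} (hf : AlmostAffine f) {s : ℝ} (hs : ∀ A, |f A| ≤ s)
    (h0 : f ∅ ≤ 0) {w : Ω → ℝ} {a b : ℝ} (ha : Fam f w a) (hb : Fam (fun A => -f A) w b) :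
    a + b ≤ (2 - 1 / 16) * s + 7 := by
  have hs' : ∀ A, f A ≤ s := fun A => (abs_le.1 (hs A)).2
  have hw : ∀ ω, 0 ≤ w ω * (1 - w ω) ∧ w ω * (1 - w ω) ≤ 1 / 4 := by
    intro ω
    obtain ⟨I, _, p, A, hp, hp1, hpw, -⟩ := ha
    have h1 : 0 ≤ w ω := by
      rw [← hpw]
      exact Finset.sum_nonneg fun i _ => mul_nonneg (hp i)
        (Set.indicator_nonneg (fun _ _ => zero_le_one) _)
    have h2 : w ω ≤ 1 := by
      rw [← hpw, ← hp1]
      refine Finset.sum_le_sum fun i _ => mul_le_of_le_one_right (hp i) ?_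
      exact Set.indicator_le_self' (fun _ _ => zero_le_one) _
    exact ⟨mul_nonneg h1 (by linarith), by nlinarith [sq_nonneg (w ω - 1 / 2)]⟩
  have h1 := Fam.univ_add_empty hf hs ha
  -- The cover functions are `w (1 - w) ≤ 1/4`, then its square, then its fourth power.
  have h2 := Fam.inter hf hs' ha (Fam.compl hf hb)
  have h3 := Fam.inter hf hs' h2 h2
  have h4 := Fam.inter hf hs' h3 h3
  have h5 := Fam.avg_le hf hs' h0 h4 (by
    intro ω
    obtain ⟨hw0, hw1⟩ := hw ω
    have h16 : w ω * (1 - w ω) * (w ω * (1 - w ω)) ≤ 1 / 16 := by nlinarith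
    have h16' : 0 ≤ w ω * (1 - w ω) * (w ω * (1 - w ω)) := mul_nonneg hw0 hw0
    nlinarith)
  have h6 : b ≤ s := Fam.le (fun A => by linarith [(abs_le.1 (hs A)).1]) hb
  linarith

/-- `Fam.add_le` applied to the normalised positive and negative parts of `c`, exchanging their roles
and the sign of `f` when `f ∅ > 0`. -/
lemma pairing_le {Ω : Type} {f : Set Ω → ℝ} (hf : AlmostAffine f) {s : ℝ} (hs : ∀ A, |f A| ≤ s)
    (I : Type) [Fintype I] (c : I → ℝ) (A : I → Set Ω) (hc : ∑ i, c i = 0)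
    (hcA : ∀ ω, ∑ i, c i * (A i).indicator 1 ω = 0) :
    ∑ i, c i * f (A i) ≤ (31 / 32 * s + 7 / 2) * ∑ i, |c i| := by
  have hpm : ∀ i, (c i)⁺ - (c i)⁻ = c i := fun i => posPart_sub_negPart _
  have hab : ∀ i, (c i)⁺ + (c i)⁻ = |c i| := fun i => posPart_add_negPart _
  set m := ∑ i, (c i)⁺ with hm
  have hm' : ∑ i, (c i)⁻ = m := by
    have : ∑ i, (c i)⁺ - ∑ i, (c i)⁻ = 0 := by
      rw [← Finset.sum_sub_distrib]; simpa only [hpm] using hc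
    linarith
  have habs : ∑ i, |c i| = 2 * m := by
    simp only [← hab]; rw [Finset.sum_add_distrib, hm', ← hm]; ring
  have hm0 : 0 ≤ m := Finset.sum_nonneg fun i _ => posPart_nonneg _
  rcases hm0.eq_or_lt with h0 | hpos
  · have hz : ∀ i, c i = 0 := by
      have h : ∑ i, |c i| = 0 := by rw [habs, ← h0, mul_zero]
      rw [Finset.sum_eq_zero_iff_of_nonneg (fun i _ => abs_nonneg _)] at h
      exact fun i => abs_eq_zero.1 (h i (Finset.mem_univ i))
    simp [hz]
  have hcov : ∀ ω, ∑ i, (c i)⁻ / m * (A i).indicator 1 ω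
      = ∑ i, (c i)⁺ / m * (A i).indicator 1 ω := by
    intro ω
    rw [eq_comm, ← sub_eq_zero, ← Finset.sum_sub_distrib]
    have h := congrArg (· / m) (hcA ω)
    simp only [zero_div, Finset.sum_div] at h
    rw [← h]
    refine Finset.sum_congr rfl fun i _ => ?_
    rw [← sub_mul, ← sub_div, hpm]
    ring
  let w : Ω → ℝ := fun ω => ∑ i, (c i)⁺ / m * (A i).indicator 1 ω
  have fam : ∀ g : Set Ω → ℝ, Fam g w (∑ i, (c i)⁺ / m * g (A i)) := fun g =>
    ⟨I, inferInstance, fun i => (c i)⁺ / m, A, fun i => div_nonneg (posPart_nonneg _) hm0,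
      by rw [← Finset.sum_div, ← hm, div_self hpos.ne'], fun _ => rfl, le_rfl⟩
  have fam' : ∀ g : Set Ω → ℝ, Fam g w (∑ i, (c i)⁻ / m * g (A i)) := fun g =>
    ⟨I, inferInstance, fun i => (c i)⁻ / m, A, fun i => div_nonneg (negPart_nonneg _) hm0,
      by rw [← Finset.sum_div, hm', div_self hpos.ne'], hcov, le_rfl⟩
  have key : ∑ i, (c i)⁺ / m * f (A i) + ∑ i, (c i)⁻ / m * (-f (A i))
      ≤ (2 - 1 / 16) * s + 7 := by
    rcases le_total (f ∅) 0 with h | h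
    · exact Fam.add_le hf hs h (fam f) (fam' fun A => -f A)
    · have hneg : AlmostAffine fun A => -f A := by
        intro A B hAB
        have := hf A B hAB
        rw [← abs_neg] at this
        rwa [show -f (A ∪ B) + -f ∅ - -f A - -f B = -(f (A ∪ B) + f ∅ - f A - f B) by ring]
      have h2 : Fam (fun A => - -f A) w (∑ i, (c i)⁺ / m * f (A i)) := by
        simpa only [neg_neg] using fam f
      rw [add_comm]
      exact Fam.add_le hneg (fun A => by rw [abs_neg]; exact hs A) (by linarith)
        (fam' fun A => -f A) h2
  have heq : ∑ i, c i * f (A i)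
      = m * (∑ i, (c i)⁺ / m * f (A i) + ∑ i, (c i)⁻ / m * (-f (A i))) := by
    rw [← Finset.sum_add_distrib, Finset.mul_sum]
    refine Finset.sum_congr rfl fun i _ => ?_
    nth_rewrite 1 [← hpm i]
    field_simp
    ring
  rw [heq, habs]
  nlinarith [mul_le_mul_of_nonneg_left key hm0]

/-! ### The Kalton–Roberts theorem -/

/-- The dual form of being within `s` of a measure plus a constant. -/
def PairingBound {Ω : Type} (ν : Set Ω → ℝ) (s : ℝ) : Prop :=
  ∀ (I : Type) [Fintype I] (c : I → ℝ) (A : I → Set Ω), ∑ i, c i = 0 →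
    (∀ ω, ∑ i, c i * (A i).indicator 1 ω = 0) → ∑ i, c i * ν (A i) ≤ s * ∑ i, |c i|

/-- The vector whose linear relations are those respected by every measure plus a constant. -/
noncomputable def affVec {Ω : Type} (A : Set Ω) : ℝ × (Ω → ℝ) := (1, A.indicator 1)

lemma sum_affVec_eq_zero {Ω K : Type} [Fintype K] (c : K → ℝ) (A : K → Set Ω) :
    ∑ k, c k • affVec (A k) = 0 ↔
      ∑ k, c k = 0 ∧ ∀ ω, ∑ k, c k * (A k).indicator 1 ω = 0 := by
  simp [affVec, Prod.ext_iff, Prod.fst_sum, Prod.snd_sum, funext_iff, Finset.sum_apply]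

lemma sum_affVec_disjoint {Ω : Type} (A B : Set Ω) (h : Disjoint A B) :
    ∑ k : Fin 4, (![1, 1, -1, -1] : Fin 4 → ℝ) k • affVec ((![A ∪ B, ∅, A, B] : Fin 4 → Set Ω) k)
      = 0 := by
  rw [sum_affVec_eq_zero]
  refine ⟨by simp [Fin.sum_univ_four], fun ω => ?_⟩
  simp [Fin.sum_univ_four, Set.indicator_union_of_disjoint h]

/-- By Hahn–Banach, `ν` may be replaced by an almost affine `f` with `|f| ≤ s` without changing the
pairing with any relation. -/
lemma PairingBound.improve {Ω : Type} {ν : Set Ω → ℝ} (hν : AlmostAffine ν) {s : ℝ} (hs : 0 ≤ s)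
    (h : PairingBound ν s) : PairingBound ν (31 / 32 * s + 7 / 2) := by
  obtain ⟨f, hfs, hf⟩ := hahn_banach_l1 (affVec (Ω := Ω)) ν s hs (fun K _ c A hc => by
    rw [sum_affVec_eq_zero] at hc
    exact h K c A hc.1 hc.2)
  have hfa : AlmostAffine f := by
    intro A B hAB
    have h1 := hf _ _ _ (sum_affVec_disjoint A B hAB)
    have h2 := hν A B hAB
    simp only [Fin.sum_univ_four, Matrix.cons_val] at h1
    rwa [show f (A ∪ B) + f ∅ - f A - f B = ν (A ∪ B) + ν ∅ - ν A - ν B by linarith]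
  intro I _ c A hc hcA
  rw [← hf I c A ((sum_affVec_eq_zero c A).2 ⟨hc, hcA⟩)]
  exact pairing_le hfa hfs I c A hc hcA

/-- The infimum of the admissible bounds is at most `112`, the fixed point of `s ↦ 31/32 s + 7/2`;
finiteness of `Ω` ensures that some bound is admissible. -/
lemma pairingBound_of_finite {Ω : Type} [Finite Ω] {ν : Set Ω → ℝ} (hν : AlmostAffine ν) :
    PairingBound ν 113 := by
  let T : Set ℝ := {s | 0 ≤ s ∧ PairingBound ν s}
  have hbdd : BddBelow T := ⟨0, fun s hs => hs.1⟩
  have hne : T.Nonempty := by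
    obtain ⟨C, hC⟩ := (Set.finite_range fun A => |ν A|).bddAbove
    have hC' : ∀ A, |ν A| ≤ C := fun A => hC ⟨A, rfl⟩
    refine ⟨C, (abs_nonneg _).trans (hC' ∅), fun I _ c A _ _ => ?_⟩
    rw [Finset.mul_sum]
    refine Finset.sum_le_sum fun i _ => ?_
    calc c i * ν (A i) ≤ |c i| * |ν (A i)| := by rw [← abs_mul]; exact le_abs_self _
      _ ≤ |c i| * C := by gcongr; exact hC' _
      _ = _ := mul_comm _ _
  have hinf : sInf T ≤ 112 := by
    by_contra! hlt
    obtain ⟨s, hsT, hs⟩ := exists_lt_of_csInf_lt hne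
      (show sInf T < 32 / 31 * (sInf T - 7 / 2) by linarith)
    have := csInf_le hbdd (show 31 / 32 * s + 7 / 2 ∈ T from
      ⟨by linarith [hsT.1], hsT.2.improve hν hsT.1⟩)
    linarith
  obtain ⟨s, hsT, hs⟩ := exists_lt_of_csInf_lt hne (show sInf T < 113 by linarith)
  intro I _ c A hc hcA
  refine (hsT.2 I c A hc hcA).trans ?_
  gcongr

lemma IsSetAlg.biUnion_mem {Ω K : Type} {F : Set (Set Ω)} (hF : IsSetAlg F) {t : Set K}
    (ht : t.Finite) (A : K → Set Ω) (hA : ∀ k ∈ t, A k ∈ F) : (⋃ k ∈ t, A k) ∈ F := by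
  induction t, ht using Set.Finite.induction_on with
  | empty => simpa using hF.1
  | insert _ _ ih =>
    rw [Set.biUnion_insert]
    exact hF.2.2 _ (hA _ (Set.mem_insert _ _)) _
      (ih fun k hk => hA k (Set.mem_insert_of_mem _ hk))

/-- The points whose membership pattern with respect to finitely many members of `F` lies in a given
set of patterns form a member of `F`. -/
lemma IsSetAlg.preimage_pattern_mem {Ω K : Type} [Finite K] {F : Set (Set Ω)} (hF : IsSetAlg F)
    (A : K → Set Ω) (hA : ∀ k, A k ∈ F) (P : Set (Set K)) :
    {ω | {k | ω ∈ A k} ∈ P} ∈ F := by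
  classical
  have hatom : ∀ q : Set K, {ω | {k | ω ∈ A k} = q} ∈ F := by
    intro q
    have h := hF.2.1 _ (hF.biUnion_mem (Set.finite_univ (α := K))
      (fun k => if k ∈ q then (A k)ᶜ else A k) (fun k _ => by
        split_ifs
        · exact hF.2.1 _ (hA k)
        · exact hA k))
    convert h using 1
    ext ω
    simp only [Set.mem_ofPred_eq, Set.mem_compl_iff, Set.mem_iUnion, not_exists, Set.ext_iff,
      Set.mem_univ, true_implies]
    refine forall_congr' fun k => ?_
    by_cases hk : k ∈ q <;> simp [hk]
  have h := hF.biUnion_mem (Set.toFinite P) _ (fun q _ => hatom q)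
  convert h using 1
  ext ω
  simp

/-- Reduction to a finite algebra: push `ν` forward to the finite set of membership patterns with
respect to the `A k` that are realised by some point. -/
lemma pairing_le_of_setAlg {Ω : Type} {F : Set (Set Ω)} (hF : IsSetAlg F) {ν : Set Ω → ℝ}
    (hν : OneAdd F ν) (K : Type) [Fintype K] (c : K → ℝ) (A : K → F) (hc : ∑ k, c k = 0)
    (hcA : ∀ ω, ∑ k, c k * (A k : Set Ω).indicator 1 ω = 0) :
    ∑ k, c k * ν (A k) ≤ 113 * ∑ k, |c k| := by
  classical
  let π : Ω → Set K := fun ω => {k | ω ∈ (A k : Set Ω)}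
  let pre : Set (Set.range π) → Set Ω := fun P => {ω | (⟨π ω, ω, rfl⟩ : Set.range π) ∈ P}
  have hpre : ∀ P, pre P ∈ F := by
    intro P
    convert hF.preimage_pattern_mem (fun k => (A k : Set Ω)) (fun k => (A k).2)
      (Subtype.val '' P) using 1
    ext ω
    simp only [pre, Set.mem_ofPred_eq, Set.mem_image, Subtype.exists, exists_and_right,
      exists_eq_right]
    constructor
    · exact fun h => ⟨⟨ω, rfl⟩, h⟩
    · exact fun ⟨_, h⟩ => h
  have hempty : |ν ∅| ≤ 1 := by
    have := hν ∅ hF.1 ∅ hF.1 (disjoint_bot_left)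
    simpa using this
  have haff : AlmostAffine fun P => ν (pre P) := by
    intro P Q hPQ
    have h := hν (pre P) (hpre P) (pre Q) (hpre Q) (by
      rw [Set.disjoint_left] at hPQ ⊢
      exact fun ω h1 h2 => hPQ h1 h2)
    have e1 : pre (P ∪ Q) = pre P ∪ pre Q := rfl
    have e2 : pre ∅ = ∅ := rfl
    simp only [e1, e2]
    rw [Real.norm_eq_abs, abs_le] at h
    rw [abs_le] at hempty ⊢
    constructor <;> linarith [h.1, h.2, hempty.1, hempty.2]
  have hA : ∀ k, pre {q | k ∈ q.1} = A k := fun k => rfl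
  have := pairingBound_of_finite haff K c (fun k => {q | k ∈ q.1}) hc (by
    rintro ⟨_, ω, rfl⟩
    rw [← hcA ω]
    refine Finset.sum_congr rfl fun k _ => ?_
    congr 1)
  simpa only [hA] using this

/-- The Kalton–Roberts theorem with the constant `2 * 113 + 1`: the approximation is first obtained
up to `113` by a measure plus a constant, and that constant is at most `113 + 1`. -/
theorem kalton_roberts : IsKRConst 227 := by
  intro Ω F hF ν hν
  classical
  obtain ⟨f, hfs, hf⟩ := hahn_banach_l1 (fun A : F => affVec (A : Set Ω)) (fun A => ν A) 113
    (by norm_num) (fun K _ c A hc => by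
      rw [sum_affVec_eq_zero] at hc
      exact pairing_le_of_setAlg hF hν K c A hc.1 hc.2)
  have hempty : |ν ∅| ≤ 1 := by
    have := hν ∅ hF.1 ∅ hF.1 (disjoint_bot_left)
    simpa using this
  let g : Set Ω → ℝ := fun A => if h : A ∈ F then f ⟨A, h⟩ else 0
  have hg : ∀ A, |g A| ≤ 113 := by
    intro A
    simp only [g]
    split_ifs
    · exact hfs _
    · norm_num
  refine ⟨fun A => (ν A - g A) - (ν ∅ - g ∅), fun A hA B hB hAB => ?_, fun A hA => ?_⟩
  · have h := hf (Fin 4) ![1, 1, -1, -1]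
      ![⟨A ∪ B, hF.2.2 A hA B hB⟩, ⟨∅, hF.1⟩, ⟨A, hA⟩, ⟨B, hB⟩] (by
        rw [← sum_affVec_disjoint A B hAB]
        simp [Fin.sum_univ_four])
    simp only [Fin.sum_univ_four, Matrix.cons_val] at h
    simp only [g, hA, hB, hF.1, hF.2.2 A hA B hB, dif_pos]
    linarith
  · have h1 := abs_le.1 (hg A)
    have h2 := abs_le.1 (hg ∅)
    rw [abs_le] at hempty ⊢
    constructor <;> linarith [h1.1, h1.2, h2.1, h2.2, hempty.1, hempty.2]

/-! ### Injective spaces -/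

/-- every injective Banach space has the SVM property. -/
theorem stmt_4 (X : Type) [NormedAddCommGroup X] [NormedSpace ℝ X] [CompleteSpace X]
    (hX : IsInjectiveBanach X) :
    ∃ v : ℝ, HasSVMBound X v := by
  let Γ := {g : StrongDual ℝ X // ‖g‖ ≤ 1}
  have hΓ : ∀ (g : Γ) (x : X), ‖g.1 x‖ ≤ ‖x‖ := fun g x => by
    simpa using g.1.le_of_opNorm_le g.2 x
  let J₀ : X →ₗ[ℝ] lp (fun _ : Γ => ℝ) ∞ :=
    { toFun := fun x => ⟨fun g => g.1 x, memℓp_infty ⟨‖x‖, by rintro _ ⟨g, rfl⟩; exact hΓ g x⟩⟩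
      map_add' := fun x y => by ext g; exact map_add g.1 x y
      map_smul' := fun r x => by ext g; exact map_smul g.1 r x }
  -- `J₀` is isometric because the norm of `x` is attained by a functional in the dual unit ball.
  let J : X →ₗᵢ[ℝ] lp (fun _ : Γ => ℝ) ∞ := ⟨J₀, fun x => by
    refine le_antisymm (lp.norm_le_of_forall_le (norm_nonneg _) fun g => hΓ g x) ?_
    obtain ⟨g, hg, hgx⟩ := exists_dual_vector'' ℝ x
    have := lp.norm_apply_le_norm (by simp) (J₀ x) (⟨g, hg⟩ : Γ)
    change ‖g x‖ ≤ _ at this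
    rw [hgx] at this
    simpa using this⟩
  have hJ : ∀ x (g : Γ), J x g = g.1 x := fun x g => rfl
  obtain ⟨P, hP⟩ := hX (lp (fun _ : Γ => ℝ) ∞) (LinearMap.range J.toLinearMap)
    (by
      have h : ((LinearMap.range J.toLinearMap : Submodule ℝ _) : Set (lp (fun _ : Γ => ℝ) ∞))
          = Set.range J := by ext; simp
      rw [h]
      exact J.isometry.isClosedEmbedding.isClosed_range)
    (J.equivRange.symm : _ →L[ℝ] X)
  have hPJ : ∀ x, P (J x) = x := fun x => by
    have := hP (J.equivRange x)
    simpa using this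
  refine ⟨‖P‖ * 227, fun Ω F hF ν hν => ?_⟩
  have hμ : ∀ g : Γ, ∃ μ : Set Ω → ℝ, VectMeas F μ ∧ ∀ A ∈ F, |g.1 (ν A) - μ A| ≤ 227 :=
    fun g => kalton_roberts Ω F hF (fun A => g.1 (ν A)) (fun A hA B hB hAB => by
      rw [← map_sub, ← map_sub]
      exact (hΓ g _).trans (hν A hA B hB hAB))
  choose μ hμa hμb using hμ
  classical
  let D : Set Ω → lp (fun _ : Γ => ℝ) ∞ := fun A =>
    if hA : A ∈ F then ⟨fun g => g.1 (ν A) - μ g A,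
      memℓp_infty ⟨227, by rintro _ ⟨g, rfl⟩; exact hμb g A hA⟩⟩ else 0
  have hD : ∀ A ∈ F, ∀ g : Γ, D A g = g.1 (ν A) - μ g A := fun A hA g => by simp [D, hA]
  refine ⟨fun A => ν A - P (D A), fun A hA B hB hAB => ?_, fun A hA => ?_⟩
  · have hkey : D (A ∪ B) - D A - D B = J (ν (A ∪ B) - ν A - ν B) := by
      ext g
      simp only [lp.coeFn_sub, Pi.sub_apply, hJ, map_sub]
      rw [hD _ (hF.2.2 A hA B hB), hD A hA, hD B hB, hμa g A hA B hB hAB]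
      ring
    have h := congrArg P hkey
    rw [hPJ, map_sub, map_sub] at h
    have h' : P (D (A ∪ B)) = ν (A ∪ B) - ν A - ν B + P (D A) + P (D B) := by
      rw [← h]; abel
    dsimp only
    rw [h']
    abel
  · rw [_root_.sub_sub_cancel]
    refine (P.le_opNorm _).trans ?_
    gcongr
    exact lp.norm_le_of_forall_le (by norm_num) fun g => by
      rw [hD A hA]; exact hμb g A hA
end

section
/- Let K be a Kalton–Roberts constant and let X be an L∞,c-space. Then X has the ω-SVM property with constant v for every v > cK: for every v > cK, every finite set algebra F and every 1-additive ν : F → X, there is a vector measure μ : F → X with ‖ν(A) − μ(A)‖ ≤ v for all A ∈ F. -/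
/-!
The values of `ν` on a finite algebra span a finite-dimensional subspace of `X`, which lies in a
finite-dimensional `G` with an isomorphism `T : G ≃ ℓ∞^m` satisfying `‖T‖ * ‖T⁻¹‖ ≤ c`. Every
coordinate of `T ∘ ν` is a real function that is additive up to `‖T‖`, so after rescaling the
Kalton–Roberts constant gives an additive function at distance at most `‖T‖ * K` from it
(`exists_vectMeas_of_additive_up_to`). Putting these together coordinatewise and mapping back by
`T⁻¹` gives a vector measure at distance at most `‖T⁻¹‖ * (‖T‖ * K) ≤ c * K` from `ν`.
-/

open Cardinal ENNReal

/--  is an L∞,c-space. -/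
def IsLinftyC (Y : Type*) [NormedAddCommGroup Y] [NormedSpace ℝ Y] (c : ℝ) : Prop :=
  ∀ E : Submodule ℝ Y, FiniteDimensional ℝ E →
    ∃ F : Submodule ℝ Y, E ≤ F ∧ FiniteDimensional ℝ F ∧
      ∃ (m : ℕ) (T : F ≃L[ℝ] PiLp ⊤ (fun _ : Fin m => ℝ)),
        Module.finrank ℝ F = m ∧
        ‖(T : ↥F →L[ℝ] PiLp ⊤ (fun _ : Fin m => ℝ))‖ *
          ‖(T.symm : PiLp ⊤ (fun _ : Fin m => ℝ) →L[ℝ] ↥F)‖ ≤ c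

theorem IsKRConst.nonneg {K : ℝ} (hK : IsKRConst K) : 0 ≤ K := by
  obtain ⟨μ, -, h⟩ := hK Unit Set.univ ⟨trivial, fun _ _ => trivial, fun _ _ _ _ => trivial⟩
    (fun _ => 0) (by intro A _ B _ _; simp)
  exact (abs_nonneg _).trans (h ∅ trivial)

/-- The Kalton–Roberts bound, rescaled: a real function additive up to `a` is within `a * K` of an
additive one. -/
theorem exists_vectMeas_of_additive_up_to {K : ℝ} (hK : IsKRConst K) {Ω : Type}
    {F : Set (Set Ω)} (hF : IsSetAlg F) {a : ℝ} (ha : 0 ≤ a) (ν : Set Ω → ℝ)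
    (hν : ∀ A ∈ F, ∀ B ∈ F, Disjoint A B → |ν (A ∪ B) - ν A - ν B| ≤ a) :
    ∃ μ : Set Ω → ℝ, VectMeas F μ ∧ ∀ A ∈ F, |ν A - μ A| ≤ a * K := by
  rcases ha.eq_or_lt with rfl | ha
  · -- Rescaling by `a⁻¹` is impossible here, but `ν` itself is additive.
    refine ⟨ν, fun A hA B hB hAB => ?_, fun A _ => by simp⟩
    have h := abs_nonpos_iff.1 (hν A hA B hB hAB)
    linarith
  · obtain ⟨μ, hμ, h⟩ := hK Ω F hF (fun A => a⁻¹ * ν A) (by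
      intro A hA B hB hAB
      rw [← mul_sub, ← mul_sub, Real.norm_eq_abs, abs_mul, abs_of_pos (inv_pos.2 ha),
        inv_mul_le_iff₀ ha, mul_one]
      exact hν A hA B hB hAB)
    refine ⟨fun A => a * μ A, fun A hA B hB hAB => ?_, fun A hA => ?_⟩
    · simp only [hμ A hA B hB hAB, mul_add]
    · have e : ν A - a * μ A = a * (a⁻¹ * ν A - μ A) := by field_simp
      rw [e, abs_mul, abs_of_pos ha]
      exact mul_le_mul_of_nonneg_left (h A hA) ha.le

/-- every L∞,c-space has the ω-SVM property with any constant
v > c·K, where K is a Kalton–Roberts constant. -/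
theorem stmt_5 (K : ℝ) (hK : IsKRConst K)
    (X : Type) [NormedAddCommGroup X] [NormedSpace ℝ X] [CompleteSpace X]
    (c : ℝ) (hc : 1 ≤ c) (hX : IsLinftyC X c)
    (v : ℝ) (hv : c * K < v) :
    HasOmegaSVMBound X v := by
  intro Ω F hF hfin ν hν
  have hK0 := hK.nonneg
  have hE : FiniteDimensional ℝ (Submodule.span ℝ (ν '' F)) :=
    FiniteDimensional.span_of_finite ℝ (hfin.image ν)
  obtain ⟨G, hEG, -, m, T, -, hT⟩ := hX _ hE
  have hmem : ∀ A ∈ F, ν A ∈ G := fun A hA => hEG (Submodule.subset_span ⟨A, hA, rfl⟩)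
  set S : ↥G →L[ℝ] PiLp ⊤ (fun _ : Fin m => ℝ) :=
    T.toContinuousLinearMap with hS
  set R : PiLp ⊤ (fun _ : Fin m => ℝ) →L[ℝ] ↥G :=
    T.symm.toContinuousLinearMap with hR
  classical
  -- `ν` with values in `G`, extended by `0` outside `F`
  let ν' : Set Ω → G := fun A => if h : A ∈ F then ⟨ν A, hmem A h⟩ else 0
  have hν' : ∀ A ∈ F, (ν' A : X) = ν A := fun A hA => by simp [ν', hA]
  have hadd : ∀ i : Fin m, ∀ A ∈ F, ∀ B ∈ F, Disjoint A B →
      |S (ν' (A ∪ B)) i - S (ν' A) i - S (ν' B) i| ≤ ‖S‖ := by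
    intro i A hA B hB hAB
    have h1 : ‖ν' (A ∪ B) - ν' A - ν' B‖ ≤ 1 := by
      rw [← Submodule.norm_coe, Submodule.coe_sub, Submodule.coe_sub, hν' _ (hF.2.2 A hA B hB),
        hν' A hA, hν' B hB]
      exact hν A hA B hB hAB
    have h2 := (PiLp.norm_apply_le (S (ν' (A ∪ B) - ν' A - ν' B)) i).trans
      (S.le_of_opNorm_le_of_le le_rfl h1)
    simpa using h2
  choose μ hμ hμK using fun i : Fin m =>
    exists_vectMeas_of_additive_up_to hK hF (norm_nonneg S) (fun A => S (ν' A) i) (hadd i)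
  let M : Set Ω → PiLp ⊤ (fun _ : Fin m => ℝ) := fun A => WithLp.toLp ⊤ fun i => μ i A
  refine ⟨fun A => (R (M A) : X), fun A hA B hB hAB => ?_, fun A hA => ?_⟩
  · have h : M (A ∪ B) = M A + M B := by
      ext i
      exact hμ i A hA B hB hAB
    simp [h]
  · have h1 : ‖S (ν' A) - M A‖ ≤ ‖S‖ * K := by
      rw [← PiLp.norm_ofLp, pi_norm_le_iff_of_nonneg (by positivity)]
      exact fun i => hμK i A hA
    have h2 : ν A - (R (M A) : X) = ((R (S (ν' A) - M A) : G) : X) := by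
      simp [hS, hR, hν' A hA]
    rw [h2, Submodule.norm_coe]
    calc ‖R (S (ν' A) - M A)‖ ≤ ‖R‖ * (‖S‖ * K) := R.le_of_opNorm_le_of_le le_rfl h1
      _ = ‖S‖ * ‖R‖ * K := by ring
      _ ≤ c * K := mul_le_mul_of_nonneg_right hT hK0
      _ ≤ v := hv.le
end

section
/- Let Γ be a set and let X be a Banach space having the (2^|Γ|)⁺-SVM property with constant w, i.e. the approximation property of 1-additive maps holds (with bound w) for every set algebra of cardinality at most 2^|Γ|. Let Y₀ be the linear subspace of ℓ∞(Γ) consisting of all step functions, i.e. finite linear combinations of indicator functions 1_A with A ⊆ Γ. Then for every quasi-linear map f : Y₀ → X with constant δ and every v > w there exists a linear map h : Y₀ → X such that ‖f(t) − h(t)‖ ≤ 4δ(2 + v)‖t‖ for all t ∈ Y₀. In particular, the pair (ℓ∞(Γ), X) splits. -/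
/-!
After division by `2δ`, the set function `A ↦ f (1_A)` is 1-additive on the algebra of all subsets
of `Γ`, which has cardinality `2 ^ |Γ|`. The hypothesis on `X` supplies a vector measure `μ` with
`‖f (1_A) - 2δ μ(A)‖ ≤ 2δw`, and integration against `2δ μ` is a linear map `h` on step functions
(`exists_linear_of_vectMeas`). The difference `g = f - h` is again quasi-linear with constant `δ`,
and it is bounded by `b = 2δw` on indicator functions.

It remains to see that such a `g` is bounded on the unit ball. For `0 ≤ t ≤ 1` one has
`t = (1_A + t') / 2` with `A = {t ≥ 1/2}` and again `0 ≤ t' ≤ 1`, hence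
`‖g t‖ ≤ (2δ + b + ‖g t'‖) / 2`. All iterates of `t ↦ t'` are functions of the finitely valued `t`,
and `g` is bounded on `[0, 1]`-valued functions of that kind (`exists_bound_of_finset`), so
iterating gives `‖g t‖ ≤ 2δ + b` (`bound_unitInterval`). Splitting a function in the unit ball into
positive and negative parts gives `6δ + 2b = 4δ(3/2 + w) ≤ 4δ(2 + v)` (`bound_unitBall`).
-/

open Cardinal ENNReal

/-- The subspace of step functions in l_infinity(Gamma): the span of indicator functions. -/
noncomputable def stepFunctions (Γ : Type) : Submodule ℝ ↥(lp (fun _ : Γ => ℝ) ⊤) :=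
  Submodule.span ℝ {x | ∃ A : Set Γ, ∀ γ : Γ, x γ = Set.indicator A (fun _ => (1 : ℝ)) γ}

section StepSplitting

open MeasureTheory

/-! ### Quasi-linear maps on simple functions, bounded on indicators -/

/-- On a single simple function `s`, postcomposition with functions `φ` of absolute value at most
one and vanishing off a fixed finite set gives a bounded set of values of `G`. This makes the
remainder of the binary expansion in `bound_unitInterval` negligible. -/
lemma exists_bound_of_finset {Γ X : Type*} [MeasurableSpace Γ] [NormedAddCommGroup X]
    [NormedSpace ℝ X] (G : SimpleFunc Γ ℝ → X) {δ b : ℝ}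
    (hom : ∀ (a : ℝ) (s : SimpleFunc Γ ℝ), G (a • s) = a • G s)
    (quasi : ∀ s t : SimpleFunc Γ ℝ, (∀ γ, |s γ| ≤ 1) → (∀ γ, |t γ| ≤ 1) →
      ‖G (s + t) - G s - G t‖ ≤ 2 * δ)
    (ind : ∀ s : SimpleFunc Γ ℝ, (∀ γ, s γ = 0 ∨ s γ = 1) → ‖G s‖ ≤ b)
    (s : SimpleFunc Γ ℝ) (S : Finset ℝ) :
    ∃ C : ℝ, ∀ φ : ℝ → ℝ, (∀ x, |φ x| ≤ 1) → (∀ x ∉ S, φ x = 0) → ‖G (s.map φ)‖ ≤ C := by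
  classical
  induction S using Finset.induction_on with
  | empty =>
    refine ⟨0, fun φ _ h0 => ?_⟩
    have h1 : s.map φ = (0 : ℝ) • (0 : SimpleFunc Γ ℝ) := by
      ext γ
      simp [h0]
    rw [h1, hom]
    simp
  | insert c S hc ih =>
    obtain ⟨C, hC⟩ := ih
    refine ⟨2 * δ + b + C, fun φ h1 h0 => ?_⟩
    set e : SimpleFunc Γ ℝ := s.map (fun x => if x = c then 1 else 0) with he
    set ψ : ℝ → ℝ := fun x => if x = c then 0 else φ x with hψ
    have hsplit : s.map φ = φ c • e + s.map ψ := by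
      ext γ
      by_cases h : s γ = c <;> simp [he, hψ, h]
    have hψ1 : ∀ x, |ψ x| ≤ 1 := by
      intro x
      by_cases h : x = c <;> simp [hψ, h, h1]
    have hψ0 : ∀ x ∉ S, ψ x = 0 := by
      intro x hx
      by_cases h : x = c
      · simp [hψ, h]
      · simp [hψ, h, h0 x (by simp [h, hx])]
    have hq := quasi (φ c • e) (s.map ψ)
      (fun γ => by by_cases h : s γ = c <;> simp [he, h, h1]) (fun γ => by simpa using hψ1 _)
    have hb := ind e (fun γ => by by_cases h : s γ = c <;> simp [he, h])
    have hce : ‖G (φ c • e)‖ ≤ b := by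
      rw [hom, norm_smul, Real.norm_eq_abs]
      nlinarith [h1 c, abs_nonneg (φ c), norm_nonneg (G e)]
    have hCψ := hC ψ hψ1 hψ0
    rw [← hsplit] at hq
    have e1 : G (s.map φ)
        = (G (s.map φ) - G (φ c • e) - G (s.map ψ)) + G (φ c • e) + G (s.map ψ) := by abel
    rw [e1]
    exact (norm_add₃_le).trans (by linarith)

/-- Binary expansion: a function with values in `[0, 1]` is the average of an indicator function
and another function with values in `[0, 1]`, so `M ≤ (2δ + b + M) / 2` for the relevant
supremum `M`. -/
lemma bound_unitInterval {Γ X : Type*} [MeasurableSpace Γ] [NormedAddCommGroup X]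
    [NormedSpace ℝ X] (G : SimpleFunc Γ ℝ → X) {δ b : ℝ}
    (hom : ∀ (a : ℝ) (s : SimpleFunc Γ ℝ), G (a • s) = a • G s)
    (quasi : ∀ s t : SimpleFunc Γ ℝ, (∀ γ, |s γ| ≤ 1) → (∀ γ, |t γ| ≤ 1) →
      ‖G (s + t) - G s - G t‖ ≤ 2 * δ)
    (ind : ∀ s : SimpleFunc Γ ℝ, (∀ γ, s γ = 0 ∨ s γ = 1) → ‖G s‖ ≤ b)
    (s : SimpleFunc Γ ℝ) (hs : ∀ γ, 0 ≤ s γ ∧ s γ ≤ 1) : ‖G s‖ ≤ 2 * δ + b := by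
  classical
  obtain ⟨C, hC⟩ := exists_bound_of_finset G hom quasi ind s s.range
  have hC' : ∀ φ : ℝ → ℝ, (∀ x, 0 ≤ φ x ∧ φ x ≤ 1) → ‖G (s.map φ)‖ ≤ C := by
    intro φ hφ
    have h1 : s.map φ = s.map (fun x => if x ∈ s.range then φ x else 0) := by
      ext γ
      simp
    rw [h1]
    refine hC _ (fun x => ?_) (fun x hx => by simp only [hx, if_false])
    split_ifs
    · rw [abs_of_nonneg (hφ x).1]
      exact (hφ x).2
    · simp
  have hiter : ∀ (n : ℕ) (φ : ℝ → ℝ), (∀ x, 0 ≤ φ x ∧ φ x ≤ 1) →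
      ‖G (s.map φ)‖ ≤ (2 * δ + b) + (1 / 2) ^ n * (C - (2 * δ + b)) := by
    intro n
    induction n with
    | zero =>
      intro φ hφ
      have := hC' φ hφ
      simpa using this
    | succ n ih =>
      intro φ hφ
      set e : SimpleFunc Γ ℝ := s.map (fun x => if 1 / 2 ≤ φ x then 1 else 0) with he
      set ψ : ℝ → ℝ := fun x => 2 * φ x - if 1 / 2 ≤ φ x then 1 else 0 with hψ
      have hsplit : s.map φ = (1 / 2 : ℝ) • (e + s.map ψ) := by
        ext γ
        simp only [he, hψ, SimpleFunc.coe_smul, SimpleFunc.coe_add, SimpleFunc.coe_map,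
          Pi.smul_apply, Pi.add_apply, Function.comp_apply, smul_eq_mul]
        ring
      have hψ1 : ∀ x, 0 ≤ ψ x ∧ ψ x ≤ 1 := by
        intro x
        have := hφ x
        simp only [hψ]
        split_ifs <;> constructor <;> linarith
      have hei : ∀ γ, e γ = 0 ∨ e γ = 1 := by
        intro γ
        by_cases h : 1 / 2 ≤ φ (s γ)
        · right
          simp only [he, SimpleFunc.coe_map, Function.comp_apply, if_pos h]
        · left
          simp only [he, SimpleFunc.coe_map, Function.comp_apply, if_neg h]
      have hq := quasi e (s.map ψ)
        (fun γ => by rcases hei γ with h | h <;> simp [h])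
        (fun γ => by
          simp only [SimpleFunc.coe_map, Function.comp_apply]
          rw [abs_of_nonneg (hψ1 _).1]
          exact (hψ1 _).2)
      have hb := ind e hei
      have hi := ih ψ hψ1
      have e1 : G (e + s.map ψ) = (G (e + s.map ψ) - G e - G (s.map ψ)) + G e + G (s.map ψ) := by
        abel
      have hsum : ‖G (e + s.map ψ)‖ ≤ 2 * δ + b + ‖G (s.map ψ)‖ := by
        rw [e1]
        exact (norm_add₃_le).trans (by linarith)
      rw [hsplit, hom, norm_smul, pow_succ, Real.norm_eq_abs, abs_of_pos (by norm_num)]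
      linarith
  have hs' : s.map (fun x => max 0 (min x 1)) = s := by
    ext γ
    simp [(hs γ).1, (hs γ).2]
  have hlim : Filter.Tendsto (fun n : ℕ => (2 * δ + b) + (1 / 2 : ℝ) ^ n * (C - (2 * δ + b)))
      Filter.atTop (nhds ((2 * δ + b) + 0 * (C - (2 * δ + b)))) :=
    ((_root_.tendsto_pow_atTop_nhds_zero_of_lt_one (by norm_num)
      (by norm_num)).mul_const _).const_add _
  have hle := ge_of_tendsto' hlim
    (fun n => hiter n (fun x => max 0 (min x 1)) (fun x => ⟨le_max_left _ _, by simp⟩))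
  rw [hs'] at hle
  linarith

/-- Passage from `[0, 1]`-valued functions to the unit ball, by splitting into positive and
negative parts. -/
lemma bound_unitBall {Γ X : Type*} [MeasurableSpace Γ] [NormedAddCommGroup X]
    [NormedSpace ℝ X] (G : SimpleFunc Γ ℝ → X) {δ b : ℝ}
    (hom : ∀ (a : ℝ) (s : SimpleFunc Γ ℝ), G (a • s) = a • G s)
    (quasi : ∀ s t : SimpleFunc Γ ℝ, (∀ γ, |s γ| ≤ 1) → (∀ γ, |t γ| ≤ 1) →
      ‖G (s + t) - G s - G t‖ ≤ 2 * δ)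
    (ind : ∀ s : SimpleFunc Γ ℝ, (∀ γ, s γ = 0 ∨ s γ = 1) → ‖G s‖ ≤ b)
    (s : SimpleFunc Γ ℝ) (hs : ∀ γ, |s γ| ≤ 1) : ‖G s‖ ≤ 6 * δ + 2 * b := by
  have hp : ∀ γ, 0 ≤ (s.map (fun x => max x 0)) γ ∧ (s.map (fun x => max x 0)) γ ≤ 1 := by
    intro γ
    simpa using (abs_le.1 (hs γ)).2
  have hn : ∀ γ, 0 ≤ (s.map (fun x => max (-x) 0)) γ ∧ (s.map (fun x => max (-x) 0)) γ ≤ 1 := by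
    intro γ
    have := (abs_le.1 (hs γ)).1
    simp only [SimpleFunc.coe_map, Function.comp_apply]
    exact ⟨le_max_right _ _, max_le (by linarith) zero_le_one⟩
  have h1 := bound_unitInterval G hom quasi ind _ hp
  have h2 := bound_unitInterval G hom quasi ind _ hn
  set p := s.map (fun x => max x 0) with hpd
  set n := s.map (fun x => max (-x) 0) with hnd
  have hsplit : s = p + (-1 : ℝ) • n := by
    ext γ
    simp only [hpd, hnd, SimpleFunc.coe_smul, SimpleFunc.coe_add, SimpleFunc.coe_map,
      Pi.smul_apply, Pi.add_apply, Function.comp_apply, smul_eq_mul]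
    rcases le_total 0 (s γ) with h | h
    · rw [max_eq_left h, max_eq_right (by linarith)]; ring
    · rw [max_eq_right h, max_eq_left (by linarith)]; ring
  have hq := quasi p ((-1 : ℝ) • n)
    (fun γ => by rw [abs_of_nonneg (hp γ).1]; exact (hp γ).2)
    (fun γ => by
      rw [SimpleFunc.coe_smul, Pi.smul_apply, smul_eq_mul, neg_one_mul, abs_neg,
        abs_of_nonneg (hn γ).1]
      exact (hn γ).2)
  have h3 : ‖G ((-1 : ℝ) • n)‖ ≤ 2 * δ + b := by
    rw [hom]
    simpa using h2
  rw [← hsplit] at hq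
  have e1 : G s = (G s - G p - G ((-1 : ℝ) • n)) + G p + G ((-1 : ℝ) • n) := by abel
  rw [e1]
  exact (norm_add₃_le).trans (by linarith)

/-! ### Step functions as simple functions, and integration -/

/-- Every step function takes only finitely many values. -/
lemma finite_range_of_mem_stepFunctions {Γ : Type} {x : lp (fun _ : Γ => ℝ) ⊤}
    (hx : x ∈ stepFunctions Γ) : (Set.range (x : Γ → ℝ)).Finite := by
  induction hx using Submodule.span_induction with
  | mem x hx =>
    obtain ⟨A, hA⟩ := hx
    refine (Set.toFinite ({0, 1} : Set ℝ)).subset ?_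
    rintro _ ⟨γ, rfl⟩
    by_cases h : γ ∈ A <;> simp [hA, h]
  | zero =>
    refine (Set.toFinite ({0} : Set ℝ)).subset ?_
    rintro _ ⟨γ, rfl⟩
    simp
  | add x y _ _ hx hy =>
    refine (hx.image2 (fun a b => a + b) hy).subset ?_
    rintro _ ⟨γ, rfl⟩
    exact ⟨x γ, ⟨γ, rfl⟩, y γ, ⟨γ, rfl⟩, by simp⟩
  | smul a x _ hx =>
    refine (hx.image (fun b => a * b)).subset ?_
    rintro _ ⟨γ, rfl⟩
    exact ⟨x γ, ⟨γ, rfl⟩, by simp⟩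

/-- A step function as a simple function for the discrete σ-algebra. -/
def toSimple {Γ : Type} (t : stepFunctions Γ) : @SimpleFunc Γ ⊤ ℝ :=
  @SimpleFunc.mk Γ ⊤ ℝ (t : lp (fun _ : Γ => ℝ) ⊤) (fun _ => trivial)
    (finite_range_of_mem_stepFunctions t.2)

lemma exists_indicator {Γ : Type} (A : Set Γ) : ∃ t : stepFunctions Γ,
    ∀ γ, (t : lp (fun _ : Γ => ℝ) ⊤) γ = A.indicator (fun _ => (1 : ℝ)) γ := by
  have hmem : Memℓp (E := fun _ : Γ => ℝ) (A.indicator (fun _ => (1 : ℝ))) ⊤ := by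
    refine memℓp_infty ⟨1, ?_⟩
    rintro _ ⟨γ, rfl⟩
    by_cases h : γ ∈ A <;> simp [h]
  exact ⟨⟨⟨_, hmem⟩, Submodule.subset_span ⟨A, fun γ => rfl⟩⟩, fun γ => rfl⟩

/-- Every simple function for the discrete σ-algebra is a step function. -/
lemma exists_step {Γ : Type} (s : @SimpleFunc Γ ⊤ ℝ) :
    ∃ t : stepFunctions Γ, ∀ γ, (t : lp (fun _ : Γ => ℝ) ⊤) γ = s γ := by
  let _ : MeasurableSpace Γ := ⊤
  classical
  induction s using SimpleFunc.induction with
  | const c hs =>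
    rename_i A
    obtain ⟨t, ht⟩ := exists_indicator A
    refine ⟨c • t, fun γ => ?_⟩
    by_cases h : γ ∈ A <;> simp [ht, h]
  | add _ h1 h2 =>
    obtain ⟨t1, h1⟩ := h1
    obtain ⟨t2, h2⟩ := h2
    exact ⟨t1 + t2, fun γ => by simp [h1, h2]⟩

/-- A simple function for the discrete σ-algebra as a step function; the inverse of `toSimple`. -/
noncomputable def ofSimple {Γ : Type} (s : @SimpleFunc Γ ⊤ ℝ) : stepFunctions Γ :=
  (exists_step s).choose

lemma ofSimple_apply {Γ : Type} (s : @SimpleFunc Γ ⊤ ℝ) (γ : Γ) :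
    (ofSimple s : lp (fun _ : Γ => ℝ) ⊤) γ = s γ :=
  (exists_step s).choose_spec γ

lemma step_ext {Γ : Type} {t s : stepFunctions Γ}
    (h : ∀ γ, (t : lp (fun _ : Γ => ℝ) ⊤) γ = (s : lp (fun _ : Γ => ℝ) ⊤) γ) : t = s :=
  Subtype.ext (lp.ext (funext h))

lemma step_norm_le {Γ : Type} {t : stepFunctions Γ} {C : ℝ} (hC : 0 ≤ C)
    (h : ∀ γ, |(t : lp (fun _ : Γ => ℝ) ⊤) γ| ≤ C) : ‖t‖ ≤ C :=
  lp.norm_le_of_forall_le (f := (t : lp (fun _ : Γ => ℝ) ⊤)) hC h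

/-- Integration of simple functions against a finitely additive vector measure defined on all
subsets. The zero measure serves only to make every simple function integrable, so that the
additivity results for `setToSimpleFunc` apply. -/
lemma exists_linear_of_vectMeas {Γ X : Type} [NormedAddCommGroup X] [NormedSpace ℝ X]
    (μ : Set Γ → X) (hμ : ∀ A B, Disjoint A B → μ (A ∪ B) = μ A + μ B) :
    ∃ h : stepFunctions Γ →ₗ[ℝ] X, ∀ (t : stepFunctions Γ) (A : Set Γ),
      (∀ γ, (t : lp (fun _ : Γ => ℝ) ⊤) γ = A.indicator (fun _ => (1 : ℝ)) γ) → h t = μ A := by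
  let _ : MeasurableSpace Γ := ⊤
  classical
  let T : Set Γ → ℝ →L[ℝ] X := fun A => ContinuousLinearMap.toSpanSingleton ℝ (μ A)
  have hT : FinMeasAdditive (0 : Measure Γ) T := by
    intro A B _ _ _ _ hAB
    ext
    simp [T, hμ A B hAB]
  have hT0 : T ∅ = 0 := by
    have := hμ ∅ ∅ (by simp)
    ext
    simpa [T] using this
  refine ⟨⟨⟨fun t => SimpleFunc.setToSimpleFunc T (toSimple t), fun t s => ?_⟩, fun a t => ?_⟩,
    fun t A hA => ?_⟩
  · rw [← SimpleFunc.setToSimpleFunc_add T hT integrable_zero_measure integrable_zero_measure]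
    rfl
  · rw [RingHom.id_apply, ← SimpleFunc.setToSimpleFunc_smul_real T hT a integrable_zero_measure]
    rfl
  · have h1 : toSimple t = SimpleFunc.piecewise A
        MeasurableSpace.measurableSet_top (SimpleFunc.const Γ (1 : ℝ)) (SimpleFunc.const Γ 0) := by
      ext γ
      refine (hA γ).trans ?_
      rw [SimpleFunc.piecewise_apply]
      by_cases h : γ ∈ A <;> simp [h]
    change SimpleFunc.setToSimpleFunc T (toSimple t) = μ A
    rw [h1, SimpleFunc.setToSimpleFunc_indicator T hT0]
    simp [T]

/-- The bound on the unit ball, transported to step functions and rescaled. -/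
lemma norm_le_of_quasi {Γ X : Type} [NormedAddCommGroup X] [NormedSpace ℝ X]
    (g : stepFunctions Γ → X) {δ b : ℝ} (hδ : 0 ≤ δ)
    (hom : ∀ (a : ℝ) (t : stepFunctions Γ), g (a • t) = a • g t)
    (quasi : ∀ t s : stepFunctions Γ, ‖g (t + s) - g t - g s‖ ≤ δ * (‖t‖ + ‖s‖))
    (ind : ∀ (t : stepFunctions Γ) (A : Set Γ),
      (∀ γ, (t : lp (fun _ : Γ => ℝ) ⊤) γ = A.indicator (fun _ => (1 : ℝ)) γ) → ‖g t‖ ≤ b)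
    (t : stepFunctions Γ) : ‖g t‖ ≤ (6 * δ + 2 * b) * ‖t‖ := by
  let _ : MeasurableSpace Γ := ⊤
  classical
  rcases eq_or_ne ‖t‖ 0 with h0 | h0
  · have ht : t = 0 := norm_eq_zero.1 h0
    have hg : g ((0 : ℝ) • t) = 0 := by rw [hom, zero_smul]
    rw [zero_smul, ← ht] at hg
    rw [h0, hg]
    simp
  have hnorm : ∀ s : SimpleFunc Γ ℝ, (∀ γ, |s γ| ≤ 1) → ‖ofSimple s‖ ≤ 1 := by
    intro s hs
    refine step_norm_le zero_le_one fun γ => ?_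
    rw [ofSimple_apply]
    exact hs γ
  have key := bound_unitBall (fun s : SimpleFunc Γ ℝ => g (ofSimple s)) (δ := δ) (b := b)
    (fun a s => by
      rw [← hom]
      congr 1
      exact step_ext fun γ => by simp [ofSimple_apply])
    (fun s r hs hr => by
      have h1 : ofSimple (s + r) = ofSimple s + ofSimple r :=
        step_ext fun γ => by simp [ofSimple_apply]
      rw [h1]
      refine (quasi _ _).trans ?_
      nlinarith [hnorm s hs, hnorm r hr])
    (fun s hs => ind _ {γ | s γ = 1} fun γ => by
      rw [ofSimple_apply]
      rcases hs γ with h | h <;> simp [h])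
    (toSimple (‖t‖⁻¹ • t))
    (fun γ => by
      have h1 : |((t : lp (fun _ : Γ => ℝ) ⊤) γ)| ≤ ‖t‖ :=
        lp.norm_apply_le_norm ENNReal.top_ne_zero (t : lp (fun _ : Γ => ℝ) ⊤) γ
      change |‖t‖⁻¹ * (t : lp (fun _ : Γ => ℝ) ⊤) γ| ≤ 1
      rw [abs_mul, abs_of_nonneg (by positivity), inv_mul_le_iff₀ (by positivity), mul_one]
      exact h1)
  have h2 : ofSimple (toSimple (‖t‖⁻¹ • t)) = ‖t‖⁻¹ • t :=
    step_ext fun γ => ofSimple_apply _ γ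
  simp only [h2, hom, norm_smul, norm_inv, norm_norm] at key
  rwa [inv_mul_le_iff₀ (by positivity), mul_comm] at key

end StepSplitting

/-- if X has the (2^|Γ|)⁺-SVM property with constant w, then every
quasi-linear map from the step functions of ℓ∞(Γ) into X with constant δ is at
distance ≤ 4δ(2+v) from a linear map, for every v > w. -/
theorem stmt_7 (Γ : Type)
    (X : Type) [NormedAddCommGroup X] [NormedSpace ℝ X] [CompleteSpace X]
    (w : ℝ)
    (hX : ∀ (Ω : Type) (F : Set (Set Ω)), IsSetAlg F → #(↥F) ≤ 2 ^ #Γ →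
      ∀ ν : Set Ω → X, OneAdd F ν →
        ∃ μ : Set Ω → X, VectMeas F μ ∧ ∀ A ∈ F, ‖ν A - μ A‖ ≤ w)
    (f : ↥(stepFunctions Γ) → X) (δ : ℝ)
    (hf1 : ∀ (a : ℝ) (t : ↥(stepFunctions Γ)), f (a • t) = a • f t)
    (hf2 : ∀ t s : ↥(stepFunctions Γ), ‖f (t + s) - f t - f s‖ ≤ δ * (‖t‖ + ‖s‖))
    (v : ℝ) (hv : w < v) :
    ∃ h : ↥(stepFunctions Γ) →ₗ[ℝ] X,
      ∀ t : ↥(stepFunctions Γ), ‖f t - h t‖ ≤ 4 * δ * (2 + v) * ‖t‖ := by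
  classical
  choose e he using @exists_indicator Γ
  have hnorm : ∀ A, ‖e A‖ ≤ 1 := by
    intro A
    refine step_norm_le zero_le_one fun γ => ?_
    rw [he]
    by_cases h : γ ∈ A <;> simp [h]
  have halg : IsSetAlg (Set.univ : Set (Set Γ)) := by simp [IsSetAlg]
  have hcard : #(↥(Set.univ : Set (Set Γ))) ≤ 2 ^ #Γ := by simp
  rcases le_or_gt δ 0 with hδ | hδ
  · -- Here `f` is itself linear; a negative `δ` is possible only if `stepFunctions Γ` is trivial.
    have hw : 0 ≤ w := by
      obtain ⟨μ, -, h⟩ := hX Γ Set.univ halg hcard (fun _ => 0) (by simp [OneAdd])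
      exact (norm_nonneg _).trans (h ∅ trivial)
    refine ⟨⟨⟨f, fun t s => ?_⟩, hf1⟩, fun t => ?_⟩
    · have h1 := hf2 t s
      have h2 : ‖f (t + s) - f t - f s‖ ≤ 0 :=
        h1.trans (mul_nonpos_of_nonpos_of_nonneg hδ (by positivity))
      rw [norm_le_zero_iff, sub_sub, sub_eq_zero] at h2
      exact h2
    · have h1 : 0 ≤ δ * ‖t‖ := by
        have := (norm_nonneg _).trans (hf2 t 0)
        simpa using this
      have h2 : 4 * δ * (2 + v) * ‖t‖ = 4 * (2 + v) * (δ * ‖t‖) := by ring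
      rw [h2]
      change ‖f t - f t‖ ≤ _
      rw [sub_self, norm_zero]
      exact mul_nonneg (by linarith) h1
  · obtain ⟨μ, hμ, hμw⟩ := hX Γ Set.univ halg hcard (fun A => (2 * δ)⁻¹ • f (e A)) (by
      intro A _ B _ hAB
      have h1 : e (A ∪ B) = e A + e B := step_ext fun γ => by
        simp only [Submodule.coe_add, lp.coeFn_add, Pi.add_apply, he]
        rw [Set.indicator_union_of_disjoint hAB]
      beta_reduce
      rw [h1, ← smul_sub, ← smul_sub, norm_smul, Real.norm_eq_abs, abs_of_pos (by positivity),
        inv_mul_le_iff₀ (by positivity)]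
      refine (hf2 _ _).trans ?_
      nlinarith [hnorm A, hnorm B])
    obtain ⟨h, hh⟩ := exists_linear_of_vectMeas (fun A => (2 * δ) • μ A)
      (fun A B hAB => by rw [hμ A trivial B trivial hAB, smul_add])
    refine ⟨h, fun t => ?_⟩
    have key := norm_le_of_quasi (fun t => f t - h t) (b := 2 * δ * w) hδ.le
      (fun a t => by rw [hf1, map_smul, smul_sub])
      (fun t s => by
        have h1 : f (t + s) - h (t + s) - (f t - h t) - (f s - h s) = f (t + s) - f t - f s := by
          rw [map_add]
          abel
        rw [h1]
        exact hf2 t s)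
      (fun t A htA => by
        have h1 : t = e A := step_ext fun γ => (htA γ).trans (he A γ).symm
        have h2 : f t - h t = (2 * δ) • ((2 * δ)⁻¹ • f (e A) - μ A) := by
          rw [hh t A htA, smul_sub, smul_smul, mul_inv_cancel₀ (by positivity), one_smul, ← h1]
        rw [h2, norm_smul, Real.norm_eq_abs, abs_of_pos (by positivity)]
        exact mul_le_mul_of_nonneg_left (hμw A trivial) (by positivity))
      t
    refine key.trans (mul_le_mul_of_nonneg_right ?_ (norm_nonneg _))
    nlinarith
end
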